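/- arXiv:1103.6101 — 2 statements merged into one kernel-verified Lean document; each statement's English description precedes it below -/
import Mathlib

section
/- Let Ω ⊂ ℝ² be a bounded open set, let K ⊂ {(x,y) ∈ ℝ² : 0 < x ≤ y} be a compact set and let E := {ξ ∈ ℝ^{2×2} : (λ₁(ξ), λ₂(ξ)) ∈ K}. Let φ ∈ C¹_piec(cl(Ω), ℝ²) be such that Dφ(x) ∈ E ∪ int(E^{rc}) for a.e. x ∈ Ω. Then there exists a Lipschitz map u : Ω → ℝ² with u − φ ∈ W^{1,∞}₀(Ω, ℝ²) (in particular u = φ on ∂Ω) such that Du(x) ∈ E for a.e. x ∈ Ω. -/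
open scoped BigOperators

/-- Square of the Frobenius norm of a 2×2 real matrix. -/
noncomputable def frobSq (ξ : Matrix (Fin 2) (Fin 2) ℝ) : ℝ := ∑ i, ∑ j, (ξ i j) ^ 2

/-- The Frobenius norm of a 2×2 real matrix. -/
noncomputable def frobNorm (ξ : Matrix (Fin 2) (Fin 2) ℝ) : ℝ := Real.sqrt (frobSq ξ)

/-- The smallest singular value of a 2×2 real matrix. -/
noncomputable def lam1 (ξ : Matrix (Fin 2) (Fin 2) ℝ) : ℝ :=
  (Real.sqrt (frobSq ξ + 2 * |ξ.det|) - Real.sqrt (frobSq ξ - 2 * |ξ.det|)) / 2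

/-- The largest singular value of a 2×2 real matrix. -/
noncomputable def lam2 (ξ : Matrix (Fin 2) (Fin 2) ℝ) : ℝ :=
  (Real.sqrt (frobSq ξ + 2 * |ξ.det|) + Real.sqrt (frobSq ξ - 2 * |ξ.det|)) / 2

/-- A function on 2×2 matrices is rank one convex if it is convex along rank one segments. -/
def RankOneConvex (f : Matrix (Fin 2) (Fin 2) ℝ → ℝ) : Prop :=
  ∀ (ξ η : Matrix (Fin 2) (Fin 2) ℝ) (t : ℝ), t ∈ Set.Icc (0 : ℝ) 1 →
    (ξ - η).rank = 1 → f (t • ξ + (1 - t) • η) ≤ t * f ξ + (1 - t) * f η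

/-- The rank one convex hull `E^{rc}` of a set of 2×2 matrices. -/
def rcHull (E : Set (Matrix (Fin 2) (Fin 2) ℝ)) : Set (Matrix (Fin 2) (Fin 2) ℝ) :=
  {ξ | ∀ f : Matrix (Fin 2) (Fin 2) ℝ → ℝ,
    RankOneConvex f → (∀ η ∈ E, f η ≤ 0) → f ξ ≤ 0}

/-- The rank one convex hull `U^{rc}` of an open set of 2×2 matrices. -/
def rcHullOpen (U : Set (Matrix (Fin 2) (Fin 2) ℝ)) : Set (Matrix (Fin 2) (Fin 2) ℝ) :=
  {ξ | ∃ E : Set (Matrix (Fin 2) (Fin 2) ℝ), E ⊆ U ∧ IsCompact E ∧ ξ ∈ rcHull E}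

/-- A function on 2×2 matrices is polyconvex if it is a convex function of (ξ, det ξ). -/
def PolyconvexFun (f : Matrix (Fin 2) (Fin 2) ℝ → ℝ) : Prop :=
  ∃ g : Matrix (Fin 2) (Fin 2) ℝ × ℝ → ℝ,
    ConvexOn ℝ Set.univ g ∧ ∀ ξ, f ξ = g (ξ, ξ.det)

/-- The polyconvex hull `E^{pc}` of a set of 2×2 matrices. -/
def pcHull (E : Set (Matrix (Fin 2) (Fin 2) ℝ)) : Set (Matrix (Fin 2) (Fin 2) ℝ) :=
  {ξ | ∀ f : Matrix (Fin 2) (Fin 2) ℝ → ℝ,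
    PolyconvexFun f → (∀ η ∈ E, f η ≤ 0) → f ξ ≤ 0}

/-- The polyconvex hull `U^{pc}` of an open set of 2×2 matrices. -/
def pcHullOpen (U : Set (Matrix (Fin 2) (Fin 2) ℝ)) : Set (Matrix (Fin 2) (Fin 2) ℝ) :=
  {ξ | ∃ E : Set (Matrix (Fin 2) (Fin 2) ℝ), E ⊆ U ∧ IsCompact E ∧ ξ ∈ pcHull E}

/-- A set of 2×2 matrices is polyconvex. -/
def PolyconvexSet (A : Set (Matrix (Fin 2) (Fin 2) ℝ)) : Prop :=
  ∀ (ξ : Fin 5 → Matrix (Fin 2) (Fin 2) ℝ) (t : Fin 5 → ℝ),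
    (∀ i, ξ i ∈ A) → (∀ i, 0 ≤ t i) → (∑ i, t i) = 1 →
    (∑ i, t i * (ξ i).det) = (∑ i, t i • ξ i).det →
    (∑ i, t i • ξ i) ∈ A

/-- The polyconvex hull `Pco E`: the smallest polyconvex set containing `E`. -/
def Pco (E : Set (Matrix (Fin 2) (Fin 2) ℝ)) : Set (Matrix (Fin 2) (Fin 2) ℝ) :=
  ⋂₀ {A | PolyconvexSet A ∧ E ⊆ A}

/-- A set of 2×2 matrices is isotropic if it is invariant under orthogonal transformations. -/
def Isotropic (E : Set (Matrix (Fin 2) (Fin 2) ℝ)) : Prop :=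
  ∀ R S : Matrix (Fin 2) (Fin 2) ℝ, R * R.transpose = 1 → S * S.transpose = 1 → ∀ ξ ∈ E, R * ξ * S ∈ E

/-- The distance (w.r.t. the Frobenius norm) from a matrix to a set of matrices. -/
noncomputable def distE (ξ : Matrix (Fin 2) (Fin 2) ℝ) (E : Set (Matrix (Fin 2) (Fin 2) ℝ)) : ℝ :=
  sInf ((fun η => frobNorm (ξ - η)) '' E)

/-- The function `f_θ(x,y) = xy + θ(y-x)`. -/
def ftheta (θ : ℝ) (p : ℝ × ℝ) : ℝ := p.1 * p.2 + θ * (p.2 - p.1)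

/-- The gradient of a map `u : ℝ² → ℝ²` at `x`, as a 2×2 matrix. -/
noncomputable def gradMatrix (u : (Fin 2 → ℝ) → (Fin 2 → ℝ)) (x : Fin 2 → ℝ) :
    Matrix (Fin 2) (Fin 2) ℝ :=
  LinearMap.toMatrix' (fderiv ℝ u x).toLinearMap

namespace CI
open Set Filter Topology MeasureTheory

abbrev R2 := Fin 2 → ℝ
abbrev L2 := R2 →L[ℝ] R2

/-- Finite-order lamination hull of `S`, with admissible directions `D`. -/
inductive LamHull {V : Type*} [AddCommGroup V] [Module ℝ V] (D S : Set V) : V → Prop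
  | base {ξ : V} : ξ ∈ S → LamHull D S ξ
  | step {B C : V} {t : ℝ} : LamHull D S B → LamHull D S C → B - C ∈ D → 0 < t → t < 1 →
      LamHull D S (t • B + (1 - t) • C)

/-- rank one directions -/
def RankOneDir : Set L2 := {L | ∃ (n : R2 →L[ℝ] ℝ) (a : R2), n ≠ 0 ∧ L = n.smulRight a}

/-- The sawtooth profile. -/
noncomputable def saw (t s : ℝ) : ℝ := min ((1 - t) * Int.fract s) (t * (1 - Int.fract s))

lemma saw_nonneg {t : ℝ} (h0 : 0 < t) (h1 : t < 1) (s : ℝ) : 0 ≤ saw t s := by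
  have a := Int.fract_nonneg s
  have b := Int.fract_lt_one s
  unfold saw
  exact le_min (by nlinarith) (by nlinarith)

lemma saw_le_one {t : ℝ} (h0 : 0 < t) (h1 : t < 1) (s : ℝ) : saw t s ≤ 1 := by
  have a := Int.fract_nonneg s
  have b := Int.fract_lt_one s
  exact (min_le_left _ _).trans (by nlinarith)

lemma saw_lip_aux {t : ℝ} (h0 : 0 < t) (h1 : t < 1) {x y : ℝ} (hxy : x ≤ y) :
    |saw t x - saw t y| ≤ y - x := by
  have ax := Int.fract_nonneg x
  have bx := Int.fract_lt_one x
  have ay := Int.fract_nonneg y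
  have byy := Int.fract_lt_one y
  have ex := Int.floor_add_fract x
  have ey := Int.floor_add_fract y
  rcases (Int.floor_le_floor hxy).eq_or_lt with h | h
  · have : Int.fract y - Int.fract x = y - x := by
      have : (⌊x⌋ : ℝ) = ⌊y⌋ := by exact_mod_cast h
      linarith
    unfold saw
    refine (abs_min_sub_min_le_max _ _ _ _).trans (max_le ?_ ?_)
    · rw [abs_le]; constructor <;> nlinarith
    · rw [abs_le]; constructor <;> nlinarith
  · have h' : (⌊x⌋ : ℝ) + 1 ≤ ⌊y⌋ := by exact_mod_cast h
    have s1 := saw_nonneg h0 h1 x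
    have s2 := saw_nonneg h0 h1 y
    have s3 : saw t x ≤ t * (1 - Int.fract x) := min_le_right _ _
    have s4 : saw t y ≤ (1 - t) * Int.fract y := min_le_left _ _
    rw [abs_le]; constructor <;> nlinarith

lemma saw_lip {t : ℝ} (h0 : 0 < t) (h1 : t < 1) (x y : ℝ) :
    |saw t x - saw t y| ≤ |x - y| := by
  rcases le_total x y with h | h
  · rw [abs_of_nonpos (by linarith : x - y ≤ 0)]
    have := saw_lip_aux h0 h1 h; linarith
  · rw [abs_of_nonneg (by linarith : 0 ≤ x - y), abs_sub_comm]
    exact saw_lip_aux h0 h1 h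

/-- kinks of the sawtooth -/
def sawBad (t : ℝ) : Set ℝ := {s | Int.fract s = 0 ∨ Int.fract s = t}

lemma sawBad_countable (t : ℝ) : (sawBad t).Countable := by
  have : sawBad t ⊆ range (fun n : ℤ => (n : ℝ)) ∪ range (fun n : ℤ => (n : ℝ) + t) := by
    rintro s (h | h)
    · left; exact ⟨⌊s⌋, by have := Int.floor_add_fract s; simp; linarith⟩
    · right; exact ⟨⌊s⌋, by have := Int.floor_add_fract s; simp; linarith⟩
  exact ((countable_range _).union (countable_range _)).mono this

lemma floor_eventually {s : ℝ} (h : 0 < Int.fract s) : ∀ᶠ r in 𝓝 s, ⌊r⌋ = ⌊s⌋ := by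
  have ex := Int.floor_add_fract s
  have b := Int.fract_lt_one s
  filter_upwards [Ioo_mem_nhds (by linarith : (⌊s⌋ : ℝ) < s) (by linarith : s < ⌊s⌋ + 1)] with r hr
  exact Int.floor_eq_iff.2 ⟨hr.1.le, hr.2⟩

lemma saw_local_left {t s : ℝ} (h : 0 < Int.fract s) (ht : Int.fract s < t) :
    saw t =ᶠ[𝓝 s] fun r => saw t s + (1 - t) * (r - s) := by
  have ex := Int.floor_add_fract s
  have key : ∀ r : ℝ, Int.fract r < t → saw t r = (1 - t) * Int.fract r := by
    intro r hr; unfold saw; apply min_eq_left; nlinarith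
  have h2 : s < ⌊s⌋ + t := by linarith
  filter_upwards [floor_eventually h, Iio_mem_nhds h2] with r hr hr2
  have er := Int.floor_add_fract r
  rw [hr] at er
  have hr2' : r < ⌊s⌋ + t := hr2
  rw [key s ht, key r (by linarith)]
  have : Int.fract r = r - s + Int.fract s := by linarith
  rw [this]; ring

lemma saw_local_right {t s : ℝ} (h0 : 0 < t) (ht : t < Int.fract s) :
    saw t =ᶠ[𝓝 s] fun r => saw t s + (-t) * (r - s) := by
  have ex := Int.floor_add_fract s
  have key : ∀ r : ℝ, t < Int.fract r → saw t r = t * (1 - Int.fract r) := by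
    intro r hr; unfold saw; apply min_eq_right; nlinarith
  have h2 : ⌊s⌋ + t < s := by linarith
  filter_upwards [floor_eventually (h0.trans ht), Ioi_mem_nhds h2] with r hr hr2
  have er := Int.floor_add_fract r
  rw [hr] at er
  have hr2' : ⌊s⌋ + t < r := hr2
  rw [key s ht, key r (by linarith)]
  have : Int.fract r = r - s + Int.fract s := by linarith
  rw [this]; ring

lemma isOpen_left (t : ℝ) : IsOpen {s : ℝ | 0 < Int.fract s ∧ Int.fract s < t} := by
  rw [isOpen_iff_mem_nhds]
  rintro s ⟨h, ht⟩
  have ex := Int.floor_add_fract s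
  filter_upwards [floor_eventually h, Ioo_mem_nhds (by linarith : (⌊s⌋ : ℝ) < s)
    (by linarith : s < ⌊s⌋ + t)] with r hr hr2
  have er := Int.floor_add_fract r
  rw [hr] at er
  exact ⟨by linarith [hr2.1], by linarith [hr2.2]⟩

lemma isOpen_right {t : ℝ} (h0 : 0 < t) : IsOpen {s : ℝ | t < Int.fract s} := by
  rw [isOpen_iff_mem_nhds]
  rintro s (h : t < Int.fract s)
  have ex := Int.floor_add_fract s
  have h2 : ⌊s⌋ + t < s := by linarith
  filter_upwards [floor_eventually (h0.trans h), Ioi_mem_nhds h2] with r hr hr2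
  have er := Int.floor_add_fract r
  rw [hr] at er
  have hr2' : ⌊s⌋ + t < r := hr2
  show t < Int.fract r
  linarith

lemma ae_notMem_countable {n : R2 →L[ℝ] ℝ} (hn : n ≠ 0) {S : Set ℝ} (hS : S.Countable) :
    ∀ᵐ x : R2, n x ∉ S := by
  have : {x : R2 | n x ∈ S} = ⋃ c ∈ S, {x | n x = c} := by ext; simp
  rw [ae_iff]
  simp only [not_not]
  rw [this, measure_biUnion_null_iff hS]
  intro c _
  obtain ⟨v, hv⟩ : ∃ v, n v ≠ 0 := by
    by_contra h; push Not at h; exact hn (by ext x; simp [h])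
  have h1 : {x : R2 | n x = c} = (fun x => x + (-(c / n v) • v)) ⁻¹' (LinearMap.ker n.toLinearMap : Set R2) := by
    ext x
    simp only [mem_setOf_eq, mem_preimage, SetLike.mem_coe, LinearMap.mem_ker,
      ContinuousLinearMap.coe_coe, map_add, map_smul, smul_eq_mul]
    rw [neg_mul, div_mul_cancel₀ _ hv]
    constructor <;> intro h <;> linarith
  rw [h1, measure_preimage_add_right]
  apply Measure.addHaar_submodule
  intro h
  have : v ∈ LinearMap.ker n.toLinearMap := by rw [h]; trivial
  exact hv (by simpa using this)

/-- Lipschitz with a.e. gradient bound. -/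
lemma lip_of_ae_bound {f : R2 → R2} {C : NNReal} (hf : LipschitzWith C f) {M : NNReal}
    (hM : ∀ᵐ x, ‖fderiv ℝ f x‖ ≤ M) : LipschitzWith M f := by
  have hd : ∀ᵐ x, DifferentiableAt ℝ f x := hf.ae_differentiableAt
  apply LipschitzWith.of_dist_le_mul
  intro x y
  rw [dist_eq_norm, dist_eq_norm]
  -- averages over small balls
  have key : ∀ r > 0, ‖f x - f y‖ ≤ M * ‖x - y‖ + 2 * C * r := by
    intro r hr
    set v := x - y with hv
    set B := Metric.ball (0 : R2) r with hB
    set μ := (volume : Measure R2).restrict B with hμ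
    have hBfin : volume B < ⊤ := measure_ball_lt_top
    haveI : IsFiniteMeasure μ := ⟨by simpa [hμ] using hBfin⟩
    have hBpos : 0 < volume.real B := by
      rw [measureReal_def]
      exact ENNReal.toReal_pos (Metric.measure_ball_pos volume _ hr).ne' hBfin.ne
    have hμuniv : μ.real univ = volume.real B := by simp [hμ, measureReal_def]
    let g : ℝ → R2 := fun t => ∫ z, f (y + t • v + z) ∂μ
    have hcont : ∀ t : ℝ, Continuous fun z => f (y + t • v + z) := fun t =>
      hf.continuous.comp (by fun_prop)
    have hInt0 : ∀ t : ℝ, Integrable (fun z => f (y + t • v + z)) μ := by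
      intro t
      have : IntegrableOn (fun z => f (y + t • v + z)) (Metric.closedBall (0:R2) r) volume :=
        (hcont t).continuousOn.integrableOn_compact (isCompact_closedBall _ _)
      exact this.mono_set Metric.ball_subset_closedBall
    have htr : ∀ t : ℝ, ∀ᵐ z ∂μ, DifferentiableAt ℝ f (y + t • v + z) ∧
        ‖fderiv ℝ f (y + t • v + z)‖ ≤ M := by
      intro t
      apply ae_restrict_of_ae
      have := (measurePreserving_add_left (volume : Measure R2) (y + t • v)).quasiMeasurePreserving.ae
        (hd.and hM)
      exact this
    have hder : ∀ t : ℝ, HasDerivAt g (∫ z, fderiv ℝ f (y + t • v + z) v ∂μ) t := by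
      intro t
      refine (hasDerivAt_integral_of_dominated_loc_of_lip (μ := μ) (s := univ)
        (F := fun t z => f (y + t • v + z)) (bound := fun _ => C * ‖v‖) univ_mem ?_ (hInt0 t)
        ?_ ?_ (integrable_const _) ?_).2
      · exact Eventually.of_forall fun s => (hcont s).aestronglyMeasurable
      · have : Measurable (fun z => fderiv ℝ f z v) := by
          exact measurable_fderiv_apply_const ℝ f v
        exact (this.comp (measurable_const_add _)).aestronglyMeasurable
      · refine Eventually.of_forall fun z => ?_
        refine (LipschitzWith.of_dist_le_mul fun s s' => ?_).lipschitzOnWith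
        refine (hf.dist_le_mul _ _).trans ?_
        rw [dist_eq_norm, dist_eq_norm]
        have : y + s • v + z - (y + s' • v + z) = (s - s') • v := by module
        rw [this, norm_smul]
        have h1 : ((Real.nnabs (C * ‖v‖) : NNReal) : ℝ) = C * ‖v‖ := by
          rw [Real.coe_nnabs, abs_of_nonneg (by positivity)]
        rw [h1]
        exact le_of_eq (by ring)
      · filter_upwards [htr t] with z hz
        have h1 : HasDerivAt (fun s : ℝ => y + s • v + z) v t := by
          have := (((hasDerivAt_id t).smul_const v).const_add y).add_const z
          simpa using this
        exact hz.1.hasFDerivAt.comp_hasDerivAt t h1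
    have hbd : ∀ t : ℝ, ‖∫ z, fderiv ℝ f (y + t • v + z) v ∂μ‖ ≤ M * ‖v‖ * volume.real B := by
      intro t
      rw [← hμuniv]
      apply norm_integral_le_of_norm_le_const
      filter_upwards [htr t] with z hz
      exact (ContinuousLinearMap.le_opNorm _ _).trans (by gcongr; exact hz.2)
    have hmv : ‖g 1 - g 0‖ ≤ M * ‖v‖ * volume.real B * ‖(1:ℝ) - 0‖ :=
      Convex.norm_image_sub_le_of_norm_hasDerivWithin_le (s := univ)
        (fun t _ => (hder t).hasDerivWithinAt) (fun t _ => hbd t) convex_univ trivial trivial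
    have happ : ∀ t : ℝ, ‖g t - volume.real B • f (y + t • v)‖ ≤ C * r * volume.real B := by
      intro t
      have : volume.real B • f (y + t • v) = ∫ z, f (y + t • v) ∂μ := by
        rw [integral_const, hμuniv]
      rw [this, ← integral_sub (hInt0 t) (integrable_const _), ← hμuniv]
      apply norm_integral_le_of_norm_le_const
      rw [hμ, ae_restrict_iff' Metric.isOpen_ball.measurableSet]
      refine Eventually.of_forall fun z hz => ?_
      rw [← dist_eq_norm]
      refine (hf.dist_le_mul _ _).trans ?_
      gcongr
      rw [dist_eq_norm]
      have : ‖z‖ < r := by simpa [hB] using hz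
      simpa using this.le
    have e1 : y + (1:ℝ) • v = x := by simp [hv]
    have e0 : y + (0:ℝ) • v = y := by simp
    have h1 := happ 1
    have h0 := happ 0
    rw [e1] at h1
    rw [e0] at h0
    have tot : volume.real B * ‖f x - f y‖ ≤ volume.real B * (M * ‖v‖ + 2 * C * r) := by
      have : volume.real B * ‖f x - f y‖ = ‖volume.real B • (f x - f y)‖ := by
        rw [norm_smul, Real.norm_of_nonneg hBpos.le]
      rw [this]
      have e : volume.real B • (f x - f y) = (g 1 - g 0) - (g 1 - volume.real B • f x)
          + (g 0 - volume.real B • f y) := by module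
      rw [e]
      refine (norm_add_le _ _).trans ?_
      have := norm_sub_le (g 1 - g 0) (g 1 - volume.real B • f x)
      simp only [sub_zero, norm_one, mul_one] at hmv
      linarith
    exact le_of_mul_le_mul_left tot hBpos
  refine le_of_forall_pos_le_add fun ε hε => ?_
  refine (key (ε / (2 * C + 1)) (by positivity)).trans ?_
  gcongr
  rw [mul_div_assoc', div_le_iff₀ (by positivity)]
  nlinarith [C.2]

end CI

namespace CI
open Set Filter Topology MeasureTheory

/-- `u` may be perturbed inside `G`, by an arbitrarily small Lipschitz map, so that the gradient
stays in `U` and lies in `T` up to small measure. -/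
def Impr (U T : Set L2) (u : R2 → R2) (G : Set R2) : Prop :=
  ∀ η : ℝ, 0 < η → ∃ w : R2 → R2, (∃ C : NNReal, LipschitzWith C w) ∧ (∀ x, ‖w x‖ ≤ η) ∧
    (∀ x, x ∉ G → w =ᶠ[𝓝 x] fun _ => 0) ∧
    (∀ᵐ x, x ∈ G → ContDiffAt ℝ 1 (u + w) x ∧ fderiv ℝ (u + w) x ∈ U) ∧
    volume {x | x ∈ G ∧ fderiv ℝ (u + w) x ∉ T} ≤ ENNReal.ofReal η

lemma add_germ {u w w' : R2 → R2} {x : R2} (h : w =ᶠ[𝓝 x] w') : (u + w) =ᶠ[𝓝 x] (u + w') :=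
  h.mono fun y hy => by simp [hy]

lemma add_germ0 {u w : R2 → R2} {x : R2} (h : w =ᶠ[𝓝 x] fun _ => 0) : (u + w) =ᶠ[𝓝 x] u :=
  h.mono fun y hy => by simp [hy]

lemma impr_base {U T : Set L2} (hTU : T ⊆ U) {u : R2 → R2} {G : Set R2}
    (h : ∀ x ∈ G, ContDiffAt ℝ 1 u x ∧ fderiv ℝ u x ∈ T) : Impr U T u G := by
  intro η hη
  refine ⟨0, ⟨0, LipschitzWith.const 0⟩, fun x => by simpa using hη.le, fun x _ => EventuallyEq.rfl,
    Eventually.of_forall fun x hx => ?_, ?_⟩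
  · simp only [add_zero]
    exact ⟨(h x hx).1, hTU (h x hx).2⟩
  · have : {x | x ∈ G ∧ fderiv ℝ (u + 0) x ∉ T} = ∅ := by
      ext x; simp only [add_zero, mem_setOf_eq, mem_empty_iff_false, iff_false, not_and, not_not]
      exact fun hx => (h x hx).2
    rw [this]; simp

lemma impr_empty {U T : Set L2} {u : R2 → R2} : Impr U T u ∅ := by
  intro η hη
  refine ⟨0, ⟨0, LipschitzWith.const 0⟩, fun x => by simpa using hη.le, fun x _ => EventuallyEq.rfl,
    Eventually.of_forall fun x hx => hx.elim, by simp⟩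

lemma impr_union {U T : Set L2} {u : R2 → R2} {G₁ G₂ : Set R2} (h₁ : Impr U T u G₁)
    (h₂ : Impr U T u G₂) (hd : Disjoint G₁ G₂) : Impr U T u (G₁ ∪ G₂) := by
  intro η hη
  obtain ⟨w₁, ⟨C₁, l₁⟩, b₁, z₁, a₁, m₁⟩ := h₁ (η / 2) (by positivity)
  obtain ⟨w₂, ⟨C₂, l₂⟩, b₂, z₂, a₂, m₂⟩ := h₂ (η / 2) (by positivity)
  have e₁ : ∀ x ∈ G₁, (u + (w₁ + w₂)) =ᶠ[𝓝 x] (u + w₁) := fun x hx =>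
    add_germ (add_germ0 (z₂ x (disjoint_left.1 hd hx)))
  have e₂ : ∀ x ∈ G₂, (u + (w₁ + w₂)) =ᶠ[𝓝 x] (u + w₂) := fun x hx => by
    rw [add_comm w₁ w₂]
    exact add_germ (add_germ0 (z₁ x (disjoint_right.1 hd hx)))
  refine ⟨w₁ + w₂, ⟨C₁ + C₂, l₁.add l₂⟩, fun x => ?_, fun x hx => ?_, ?_, ?_⟩
  · exact (norm_add_le _ _).trans (by linarith [b₁ x, b₂ x])
  · rw [mem_union, not_or] at hx
    exact (add_germ0 (z₂ x hx.2)).trans (z₁ x hx.1)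
  · filter_upwards [a₁, a₂] with x h1 h2 hx
    rcases hx with hx | hx
    · rw [(e₁ x hx).fderiv_eq]
      exact ⟨(h1 hx).1.congr_of_eventuallyEq (e₁ x hx), (h1 hx).2⟩
    · rw [(e₂ x hx).fderiv_eq]
      exact ⟨(h2 hx).1.congr_of_eventuallyEq (e₂ x hx), (h2 hx).2⟩
  · have : {x | x ∈ G₁ ∪ G₂ ∧ fderiv ℝ (u + (w₁ + w₂)) x ∉ T} ⊆
        {x | x ∈ G₁ ∧ fderiv ℝ (u + w₁) x ∉ T} ∪ {x | x ∈ G₂ ∧ fderiv ℝ (u + w₂) x ∉ T} := by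
      rintro x ⟨hx | hx, hT⟩
      · left; rw [(e₁ x hx).fderiv_eq] at hT; exact ⟨hx, hT⟩
      · right; rw [(e₂ x hx).fderiv_eq] at hT; exact ⟨hx, hT⟩
    refine (measure_mono this).trans ((measure_union_le _ _).trans ?_)
    rw [show η = η / 2 + η / 2 by ring, ENNReal.ofReal_add (by positivity) (by positivity)]
    exact add_le_add m₁ m₂

lemma impr_exhaust {U T : Set L2} {u : R2 → R2} {G : Set R2}
    (hu : ∀ᵐ x, x ∈ G → ContDiffAt ℝ 1 u x ∧ fderiv ℝ u x ∈ U)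
    (h : ∀ κ : ℝ, 0 < κ → ∃ G' ⊆ G, Impr U T u G' ∧ volume (G \ G') ≤ ENNReal.ofReal κ) :
    Impr U T u G := by
  intro η hη
  obtain ⟨G', hG', hI, hm⟩ := h (η / 2) (by positivity)
  obtain ⟨w, l, b, z, a, m⟩ := hI (η / 2) (by positivity)
  refine ⟨w, l, fun x => (b x).trans (by linarith), fun x hx => z x fun h => hx (hG' h), ?_, ?_⟩
  · filter_upwards [hu, a] with x h1 h2 hx
    by_cases hx' : x ∈ G'
    · exact h2 hx'
    · have e := add_germ0 (u := u) (z x hx')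
      rw [e.fderiv_eq]
      exact ⟨(h1 hx).1.congr_of_eventuallyEq e, (h1 hx).2⟩
  · have : {x | x ∈ G ∧ fderiv ℝ (u + w) x ∉ T} ⊆
        {x | x ∈ G' ∧ fderiv ℝ (u + w) x ∉ T} ∪ (G \ G') := by
      rintro x ⟨hx, hT⟩
      by_cases hx' : x ∈ G'
      · left; exact ⟨hx', hT⟩
      · right; exact ⟨hx, hx'⟩
    refine (measure_mono this).trans ((measure_union_le _ _).trans ?_)
    rw [show η = η / 2 + η / 2 by ring, ENNReal.ofReal_add (by positivity) (by positivity)]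
    exact add_le_add m hm

/-- The oscillating perturbation. -/
noncomputable def osc (χ : R2 → ℝ) (n : R2 →L[ℝ] ℝ) (a : R2) (t N : ℝ) (x : R2) : R2 :=
  (χ x * (saw t (N * n x) / N)) • a

lemma osc_deriv {χ : R2 → ℝ} (hχ : ContDiff ℝ 1 χ) {n : R2 →L[ℝ] ℝ} {a : R2} {t N σ : ℝ}
    (hN : 0 < N) {x : R2}
    (h : saw t =ᶠ[𝓝 (N * n x)] fun r => saw t (N * n x) + σ * (r - N * n x)) :
    ContDiffAt ℝ 1 (osc χ n a t N) x ∧ fderiv ℝ (osc χ n a t N) x =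
      (χ x * σ) • n.smulRight a + (saw t (N * n x) / N) • (fderiv ℝ χ x).smulRight a := by
  have hc : Tendsto (fun z => N * n z) (𝓝 x) (𝓝 (N * n x)) :=
    (continuous_const.mul n.continuous).tendsto x
  have e : osc χ n a t N =ᶠ[𝓝 x]
      fun z => (χ z * (saw t (N * n x) / N + σ * (n z - n x))) • a := by
    filter_upwards [hc.eventually h] with z hz
    unfold osc
    rw [hz]
    congr 2
    field_simp
  constructor
  · refine ContDiffAt.congr_of_eventuallyEq ?_ e
    have := n.contDiff (n := 1)
    fun_prop
  · rw [e.fderiv_eq]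
    have h1 : HasFDerivAt (fun z => saw t (N * n x) / N + σ * (n z - n x)) (σ • n) x :=
      ((n.hasFDerivAt.sub_const _).const_mul σ).const_add _
    have h2 := ((hχ.differentiable (by norm_num) x).hasFDerivAt.mul h1).smul_const a
    refine h2.fderiv.trans ?_
    ext v : 1
    simp
    module

lemma osc_lip {χ : R2 → ℝ} {K : NNReal} (hχ : LipschitzWith K χ) (hχ0 : ∀ x, χ x ∈ Icc (0:ℝ) 1)
    (n : R2 →L[ℝ] ℝ) (a : R2) {t N : ℝ} (hN : 0 < N) (h0 : 0 < t) (h1 : t < 1) :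
    ∃ C : NNReal, LipschitzWith C (osc χ n a t N) := by
  refine ⟨NNReal.mk ((‖n‖ + K / N) * ‖a‖) (by positivity), LipschitzWith.of_dist_le_mul fun x y => ?_⟩
  rw [dist_eq_norm]
  unfold osc
  rw [← sub_smul, norm_smul, NNReal.coe_mk]
  have hs : |saw t (N * n x) / N - saw t (N * n y) / N| ≤ ‖n‖ * dist x y := by
    rw [← sub_div, abs_div, abs_of_pos hN, div_le_iff₀ hN]
    refine (saw_lip h0 h1 _ _).trans ?_
    rw [← mul_sub, abs_mul, abs_of_pos hN, ← map_sub, dist_eq_norm]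
    have := n.le_opNorm (x - y)
    rw [Real.norm_eq_abs] at this
    nlinarith
  have hc : |χ x - χ y| ≤ K * dist x y := by
    have := hχ.dist_le_mul x y; rwa [Real.dist_eq] at this
  have hsy : |saw t (N * n y) / N| ≤ 1 / N := by
    rw [abs_of_nonneg (div_nonneg (saw_nonneg h0 h1 _) hN.le)]
    exact div_le_div_of_nonneg_right (saw_le_one h0 h1 _) hN.le
  have hcx : |χ x| ≤ 1 := by rw [abs_of_nonneg (hχ0 x).1]; exact (hχ0 x).2
  have : ‖χ x * (saw t (N * n x) / N) - χ y * (saw t (N * n y) / N)‖ ≤ (‖n‖ + K / N) * dist x y := by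
    rw [show χ x * (saw t (N * n x) / N) - χ y * (saw t (N * n y) / N) =
      χ x * (saw t (N * n x) / N - saw t (N * n y) / N) + (χ x - χ y) * (saw t (N * n y) / N) by ring]
    refine (norm_add_le _ _).trans ?_
    rw [Real.norm_eq_abs, Real.norm_eq_abs, abs_mul, abs_mul]
    have t1 := mul_le_mul hcx hs (abs_nonneg _) zero_le_one
    have t2 := mul_le_mul hc hsy (abs_nonneg _) (by positivity)
    calc _ ≤ _ := add_le_add t1 t2
      _ = _ := by field_simp
  calc _ ≤ _ := mul_le_mul_of_nonneg_right this (norm_nonneg a)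
    _ = _ := by ring

lemma exists_cutoff {G C : Set R2} (hG : IsOpen G) (hGb : Bornology.IsBounded G)
    (hC : IsClosed C) (hCG : C ⊆ G) : ∃ χ : R2 → ℝ, ContDiff ℝ 1 χ ∧ HasCompactSupport χ ∧
      (∀ x, x ∉ G → χ =ᶠ[𝓝 x] fun _ => 0) ∧ (∀ x ∈ C, χ =ᶠ[𝓝 x] fun _ => 1) ∧
      ∀ x, χ x ∈ Icc (0:ℝ) 1 := by
  obtain ⟨f, h0, h1, hf⟩ := exists_contMDiffMap_zero_one_nhds_of_isClosed
    (n := 1) (modelWithCornersSelf ℝ R2) hG.isClosed_compl hC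
    (by rwa [← subset_compl_iff_disjoint_left, compl_compl])
  rw [eventually_nhdsSet_iff_forall] at h0 h1
  refine ⟨f, f.contMDiff.contDiff, ?_, h0, h1, hf⟩
  refine HasCompactSupport.intro' hGb.isCompact_closure isClosed_closure fun x hx => ?_
  exact (h0 x fun h => hx (subset_closure h)).self_of_nhds

lemma impr_lam {U T : Set L2} (hU : IsOpen U) (hT : IsOpen T) (hTU : T ⊆ U)
    (hUl : ∀ B ∈ U, ∀ C ∈ U, B - C ∈ RankOneDir → segment ℝ B C ⊆ U) {ξ : L2}
    (hξ : LamHull RankOneDir T ξ) : ξ ∈ U ∧ ∃ δ > 0, ∀ (G : Set R2), IsOpen G →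
      Bornology.IsBounded G → ∀ u : R2 → R2,
      (∀ x ∈ G, ContDiffAt ℝ 1 u x ∧ ‖fderiv ℝ u x - ξ‖ < δ) → Impr U T u G := by
  induction hξ with
  | base h =>
    refine ⟨hTU h, ?_⟩
    obtain ⟨δ, hδ, hb⟩ := Metric.isOpen_iff.1 hT _ h
    refine ⟨δ, hδ, fun G _ _ u hu => impr_base hTU fun x hx => ⟨(hu x hx).1, hb ?_⟩⟩
    rw [Metric.mem_ball, dist_eq_norm]; exact (hu x hx).2
  | @step B C t _ _ hBC h0 h1 ihB ihC =>
    obtain ⟨hBU, δB, hδB, HB⟩ := ihB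
    obtain ⟨hCU, δC, hδC, HC⟩ := ihC
    have hseg := hUl B hBU C hCU hBC
    have hmem : t • B + (1 - t) • C ∈ segment ℝ B C := ⟨t, 1 - t, h0.le, by linarith, by ring, rfl⟩
    refine ⟨hseg hmem, ?_⟩
    have hcomp : IsCompact (segment ℝ B C) := by
      rw [segment_eq_image_lineMap]
      exact isCompact_Icc.image (AffineMap.lineMap_continuous)
    obtain ⟨ρ, hρ, hthick⟩ := hcomp.exists_thickening_subset_open hU hseg
    obtain ⟨n, a, hn, hna⟩ := hBC
    set ξ := t • B + (1 - t) • C with hξdef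
    have eB : B = ξ + (1 - t) • n.smulRight a := by rw [← hna, hξdef]; module
    have eC : C = ξ + (-t) • n.smulRight a := by rw [← hna, hξdef]; module
    refine ⟨min (min δB δC) (ρ / 2), by positivity, fun G hG hGb u hu => ?_⟩
    have hGfin : volume G < ⊤ := hGb.measure_lt_top
    intro η hη
    -- compact exhaustion and cutoff
    obtain ⟨Cp, hCpG, hCp, hCpm⟩ := hG.measurableSet.exists_isCompact_diff_lt (μ := volume)
      hGfin.ne (ε := ENNReal.ofReal (η / 2)) (by simpa using hη)
    obtain ⟨χ, χc, χs, χ0, χ1, χr⟩ := exists_cutoff hG hGb hCp.isClosed hCpG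
    obtain ⟨K, hK⟩ := ContDiff.lipschitzWith_of_hasCompactSupport χs χc (by norm_num)
    obtain ⟨N, hN⟩ := exists_nat_gt (max (‖a‖ / (η / 2)) (K * ‖a‖ / (ρ / 2)))
    have hNpos : (0:ℝ) < N := lt_of_le_of_lt (le_max_of_le_left (by positivity)) hN
    have hN1 : ‖a‖ / N ≤ η / 2 := by
      have := (le_max_left _ _).trans_lt hN
      rw [div_lt_iff₀ (by positivity)] at this
      rw [div_le_iff₀ hNpos]; linarith
    have hN2 : K * ‖a‖ / N < ρ / 2 := by
      have := (le_max_right _ _).trans_lt hN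
      rw [div_lt_iff₀ (by positivity)] at this
      rw [div_lt_iff₀ hNpos]; linarith
    set w₁ := osc χ n a t N with hw₁
    let V : Set R2 := interior {x | χ x = 1}
    let GB : Set R2 := (G ∩ V) ∩ {x | (0 < Int.fract (N * n x) ∧ Int.fract (N * n x) < t)}
    let GC : Set R2 := (G ∩ V) ∩ {x | t < Int.fract (N * n x)}
    have hNn : Continuous fun x : R2 => (N:ℝ) * n x := continuous_const.mul n.continuous
    have oB : IsOpen GB := (hG.inter isOpen_interior).inter ((isOpen_left t).preimage hNn)
    have oC : IsOpen GC := (hG.inter isOpen_interior).inter ((isOpen_right h0).preimage hNn)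
    have hdisj : Disjoint GB GC := by
      rw [disjoint_left]
      rintro x ⟨_, hx⟩ ⟨_, hy⟩
      exact absurd hx.2 (not_lt.2 (le_of_lt hy))
    have hsum : ∀ x ∈ G, ∀ L : L2, ContDiffAt ℝ 1 w₁ x → fderiv ℝ w₁ x = L →
        ContDiffAt ℝ 1 (u + w₁) x ∧ fderiv ℝ (u + w₁) x = fderiv ℝ u x + L := by
      intro x hx L hc hL
      refine ⟨(hu x hx).1.add hc, ?_⟩
      rw [← hL]
      exact fderiv_add ((hu x hx).1.differentiableAt (by norm_num)) (hc.differentiableAt (by norm_num))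
    have hV : ∀ x ∈ V, χ x = 1 ∧ fderiv ℝ χ x = 0 := by
      intro x hx
      have e : χ =ᶠ[𝓝 x] fun _ => 1 := mem_interior_iff_mem_nhds.1 hx
      exact ⟨e.self_of_nhds, by rw [e.fderiv_eq]; simp⟩
    have IB : Impr U T (u + w₁) GB := by
      refine HB GB oB (hGb.subset fun x hx => hx.1.1) _ fun x hx => ?_
      obtain ⟨c1, c2⟩ := osc_deriv (a := a) χc hNpos (saw_local_left hx.2.1 hx.2.2)
      obtain ⟨d1, d2⟩ := hsum x hx.1.1 _ c1 c2
      refine ⟨d1, ?_⟩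
      rw [d2, (hV x hx.1.2).1, (hV x hx.1.2).2, eB]
      have h := (hu x hx.1.1).2
      have e : fderiv ℝ u x + ((1 * (1 - t)) • n.smulRight a + (saw t (N * n x) / N) •
        (0 : R2 →L[ℝ] ℝ).smulRight a) - (ξ + (1 - t) • n.smulRight a) = fderiv ℝ u x - ξ := by
        have : (0 : R2 →L[ℝ] ℝ).smulRight a = 0 := by ext; simp
        rw [this]; module
      rw [e]
      exact h.trans_le ((min_le_left _ _).trans (min_le_left _ _))
    have IC : Impr U T (u + w₁) GC := by
      refine HC GC oC (hGb.subset fun x hx => hx.1.1) _ fun x hx => ?_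
      obtain ⟨c1, c2⟩ := osc_deriv (a := a) χc hNpos (saw_local_right h0 hx.2)
      obtain ⟨d1, d2⟩ := hsum x hx.1.1 _ c1 c2
      refine ⟨d1, ?_⟩
      rw [d2, (hV x hx.1.2).1, (hV x hx.1.2).2, eC]
      have h := (hu x hx.1.1).2
      have e : fderiv ℝ u x + ((1 * (-t)) • n.smulRight a + (saw t (N * n x) / N) •
        (0 : R2 →L[ℝ] ℝ).smulRight a) - (ξ + (-t) • n.smulRight a) = fderiv ℝ u x - ξ := by
        have : (0 : R2 →L[ℝ] ℝ).smulRight a = 0 := by ext; simp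
        rw [this]; module
      rw [e]
      exact h.trans_le ((min_le_left _ _).trans (min_le_right _ _))
    obtain ⟨w₂, ⟨C₂, l₂⟩, b₂, z₂, a₂, m₂⟩ := impr_union IB IC hdisj (η / 2) (by positivity)
    obtain ⟨C₁, l₁⟩ := osc_lip hK χr n a hNpos h0 h1
    have hbad : ∀ᵐ x : R2, (N * n x : ℝ) ∉ sawBad t := by
      have hne : ((N:ℝ) • n) ≠ 0 := smul_ne_zero hNpos.ne' hn
      have := ae_notMem_countable hne (sawBad_countable t)
      simpa using this
    -- general bound for u + w₁
    have hgen : ∀ x ∈ G, (N * n x : ℝ) ∉ sawBad t →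
        ContDiffAt ℝ 1 (u + w₁) x ∧ fderiv ℝ (u + w₁) x ∈ U := by
      intro x hx hxb
      obtain ⟨σ, hσ0, hσ1, hloc⟩ : ∃ σ : ℝ, -t ≤ σ ∧ σ ≤ 1 - t ∧
          saw t =ᶠ[𝓝 (N * n x)] fun r => saw t (N * n x) + σ * (r - N * n x) := by
        simp only [sawBad, mem_setOf_eq, not_or] at hxb
        rcases lt_trichotomy (Int.fract (N * n x)) t with h | h | h
        · exact ⟨1 - t, by linarith, le_rfl,
            saw_local_left (lt_of_le_of_ne (Int.fract_nonneg _) (Ne.symm hxb.1)) h⟩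
        · exact absurd h hxb.2
        · exact ⟨-t, le_rfl, by linarith, saw_local_right h0 h⟩
      obtain ⟨c1, c2⟩ := osc_deriv (a := a) χc hNpos hloc
      obtain ⟨d1, d2⟩ := hsum x hx _ c1 c2
      refine ⟨d1, hthick ?_⟩
      rw [d2, Metric.mem_thickening_iff]
      have hχx := χr x
      refine ⟨ξ + (χ x * σ) • n.smulRight a, ⟨t + χ x * σ, 1 - t - χ x * σ, ?_, ?_, by ring, ?_⟩, ?_⟩
      · nlinarith [hχx.1, hχx.2]
      · nlinarith [hχx.1, hχx.2]
      · rw [← hna, hξdef]; module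
      · rw [dist_eq_norm]
        have e : fderiv ℝ u x + ((χ x * σ) • n.smulRight a + (saw t (N * n x) / N) •
          (fderiv ℝ χ x).smulRight a) - (ξ + (χ x * σ) • n.smulRight a) =
          (fderiv ℝ u x - ξ) + (saw t (N * n x) / N) • (fderiv ℝ χ x).smulRight a := by module
        rw [e]
        refine (norm_add_le _ _).trans_lt ?_
        have hA := (hu x hx).2.trans_le (min_le_right _ _)
        have hB : ‖(saw t (N * n x) / N) • (fderiv ℝ χ x).smulRight a‖ ≤ K * ‖a‖ / N := by
          rw [norm_smul, ContinuousLinearMap.norm_smulRight_apply, Real.norm_eq_abs,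
            abs_of_nonneg (div_nonneg (saw_nonneg h0 h1 _) hNpos.le)]
          have s1 := saw_le_one h0 h1 (N * n x)
          have s2 : ‖fderiv ℝ χ x‖ ≤ K := norm_fderiv_le_of_lipschitz ℝ hK
          calc saw t (N * n x) / N * (‖fderiv ℝ χ x‖ * ‖a‖) ≤ 1 / N * (K * ‖a‖) := by gcongr
            _ = _ := by ring
        linarith
    refine ⟨w₁ + w₂, ⟨C₁ + C₂, l₁.add l₂⟩, fun x => ?_, fun x hx => ?_, ?_, ?_⟩
    · refine (norm_add_le _ _).trans ?_
      have : ‖w₁ x‖ ≤ ‖a‖ / N := by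
        rw [hw₁]; unfold osc
        rw [norm_smul, Real.norm_eq_abs, abs_of_nonneg (mul_nonneg (χr x).1
          (div_nonneg (saw_nonneg h0 h1 _) hNpos.le))]
        have s1 := saw_le_one h0 h1 (N * n x)
        have s0 := saw_nonneg h0 h1 (N * n x)
        calc χ x * (saw t (N * n x) / N) * ‖a‖ ≤ 1 * (1 / N) * ‖a‖ := by
              gcongr
              exact (χr x).2
          _ = _ := by ring
      linarith [b₂ x]
    · have hxBC : x ∉ GB ∪ GC := by
        rintro (h | h)
        · exact hx h.1.1
        · exact hx h.1.1
      refine (add_germ0 (z₂ x hxBC)).trans ?_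
      filter_upwards [χ0 x hx] with y hy
      simp [hw₁, osc, hy]
    · filter_upwards [hbad, a₂] with x hxb h2 hx
      rw [← add_assoc]
      by_cases hxBC : x ∈ GB ∪ GC
      · exact h2 hxBC
      · have e := add_germ0 (u := u + w₁) (z₂ x hxBC)
        rw [e.fderiv_eq]
        exact ⟨(hgen x hx hxb).1.congr_of_eventuallyEq e, (hgen x hx hxb).2⟩
    · have hsub : {x | x ∈ G ∧ fderiv ℝ (u + (w₁ + w₂)) x ∉ T} ⊆
          ({x | x ∈ GB ∪ GC ∧ fderiv ℝ (u + w₁ + w₂) x ∉ T} ∪ (G \ Cp)) ∪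
            {x | ¬ (N * n x : ℝ) ∉ sawBad t} := by
        rintro x ⟨hx, hxT⟩
        by_cases hxb : (N * n x : ℝ) ∈ sawBad t
        · right; simpa using hxb
        left
        by_cases hxC : x ∈ Cp
        · left
          refine ⟨?_, by rwa [add_assoc]⟩
          have hxV : x ∈ V := mem_interior_iff_mem_nhds.2 (χ1 x hxC)
          simp only [sawBad, mem_setOf_eq, not_or] at hxb
          rcases lt_trichotomy (Int.fract (N * n x)) t with h | h | h
          · left; exact ⟨⟨hx, hxV⟩, lt_of_le_of_ne (Int.fract_nonneg _) (Ne.symm hxb.1), h⟩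
          · exact absurd h hxb.2
          · right; exact ⟨⟨hx, hxV⟩, h⟩
        · right; exact ⟨hx, hxC⟩
      refine (measure_mono hsub).trans ((measure_union_le _ _).trans ?_)
      rw [ae_iff.1 hbad, add_zero]
      refine (measure_union_le _ _).trans ?_
      rw [show η = η / 2 + η / 2 by ring, ENNReal.ofReal_add (by positivity) (by positivity)]
      exact add_le_add m₂ hCpm.le

/-- Everything good can be improved. -/
lemma impr_open {U T : Set L2} (hU : IsOpen U) (hT : IsOpen T) (hTU : T ⊆ U)
    (hUl : ∀ B ∈ U, ∀ C ∈ U, B - C ∈ RankOneDir → segment ℝ B C ⊆ U)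
    (hUT : ∀ ξ ∈ U, LamHull RankOneDir T ξ) {u : R2 → R2} {O : Set R2} (hO : IsOpen O)
    (hOb : Bornology.IsBounded O)
    (hu : ∀ᵐ x, x ∈ O → ContDiffAt ℝ 1 u x ∧ fderiv ℝ u x ∈ U) : Impr U T u O := by
  refine impr_exhaust hu fun κ hκ => ?_
  let O1 : Set R2 := O ∩ {x | ContDiffAt ℝ 1 u x ∧ fderiv ℝ u x ∈ U}
  have hcd : ∀ x, ContDiffAt ℝ 1 u x → (∀ᶠ y in 𝓝 x, ContDiffAt ℝ 1 u y) ∧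
      ContinuousAt (fderiv ℝ u) x := by
    intro x hx
    refine ⟨hx.eventually (by simp), ?_⟩
    exact (hx.fderiv_right (m := 0) (by norm_num)).continuousAt
  have hO1 : IsOpen O1 := by
    refine hO.inter (isOpen_iff_mem_nhds.2 ?_)
    rintro x ⟨h1, h2⟩
    filter_upwards [(hcd x h1).1, (hcd x h1).2 (hU.mem_nhds h2)] with y a b
    exact ⟨a, b⟩
  have hO1fin : volume O1 < ⊤ := (hOb.subset inter_subset_left).measure_lt_top
  have hdiff : volume (O \ O1) = 0 := by
    rw [← ae_iff.1 hu]
    congr 1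
    ext x
    simp only [O1, mem_diff, mem_inter_iff, mem_setOf_eq]
    tauto
  obtain ⟨Cp, hCpG, hCp, hCpm⟩ := hO1.measurableSet.exists_isCompact_diff_lt (μ := volume)
      hO1fin.ne (ε := ENNReal.ofReal κ) (by simpa using hκ)
  have main : ∃ G, IsOpen G ∧ G ⊆ O1 ∧ volume (frontier G) = 0 ∧ volume (Cp \ G) = 0 ∧
      ∀ G' ⊆ G, IsOpen G' → Impr U T u G' := by
    refine hCp.induction_on (p := fun S => ∃ G, IsOpen G ∧ G ⊆ O1 ∧ volume (frontier G) = 0 ∧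
      volume (S \ G) = 0 ∧ ∀ G' ⊆ G, IsOpen G' → Impr U T u G') ?_ ?_ ?_ ?_
    · refine ⟨∅, isOpen_empty, empty_subset _, by simp, by simp, fun G' h _ => ?_⟩
      rw [subset_empty_iff.1 h]; exact impr_empty
    · rintro S S' hSS' ⟨G, h1, h2, h3, h4, h5⟩
      exact ⟨G, h1, h2, h3, measure_mono_null (diff_subset_diff_left hSS') h4, h5⟩
    · rintro S S' ⟨G, h1, h2, h3, h4, h5⟩ ⟨G', h1', h2', h3', h4', h5'⟩
      refine ⟨G ∪ (G' ∩ (closure G)ᶜ), h1.union (h1'.inter isClosed_closure.isOpen_compl),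
        union_subset h2 (inter_subset_left.trans h2'), ?_, ?_, ?_⟩
      · refine measure_mono_null (t := frontier G ∪ frontier G') ?_ (measure_union_null h3 h3')
        refine (frontier_union_subset _ _).trans ?_
        refine union_subset (inter_subset_left.trans subset_union_left) ?_
        refine inter_subset_right.trans ((frontier_inter_subset _ _).trans ?_)
        refine union_subset (inter_subset_left.trans subset_union_right) ?_
        refine inter_subset_right.trans ?_
        rw [frontier_compl]
        exact frontier_closure_subset.trans subset_union_left
      · refine measure_mono_null (t := (S \ G) ∪ (S' \ G') ∪ frontier G) ?_
          (measure_union_null (measure_union_null h4 h4') h3)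
        rintro x ⟨hx, hxG⟩
        simp only [mem_union, mem_inter_iff, mem_compl_iff, not_or, not_and, not_not] at hxG
        rcases hx with hx | hx
        · left; left; exact ⟨hx, hxG.1⟩
        · by_cases hx' : x ∈ G'
          · right; rw [h1.frontier_eq]; exact ⟨hxG.2 hx', hxG.1⟩
          · left; right; exact ⟨hx, hx'⟩
      · intro H hH hHo
        have e : H = (H ∩ G) ∪ (H ∩ (G' ∩ (closure G)ᶜ)) := by
          rw [← inter_union_distrib_left]; exact (inter_eq_left.2 hH).symm
        rw [e]
        refine impr_union (h5 _ inter_subset_right (hHo.inter h1))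
          (h5' _ (inter_subset_right.trans inter_subset_left)
            (hHo.inter (h1'.inter isClosed_closure.isOpen_compl))) ?_
        rw [disjoint_left]
        rintro x ⟨_, hx⟩ ⟨_, _, hx'⟩
        exact hx' (subset_closure hx)
    · intro x hx
      have hxO := hCpG hx
      obtain ⟨-, δ, hδ, H⟩ := impr_lam hU hT hTU hUl (hUT _ hxO.2.2)
      have hev : ∀ᶠ y in 𝓝 x, y ∈ O1 ∧ ‖fderiv ℝ u y - fderiv ℝ u x‖ < δ := by
        refine Filter.Eventually.and (hO1.mem_nhds hxO) ?_
        have := (hcd x hxO.2.1).2 (Metric.ball_mem_nhds _ hδ)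
        filter_upwards [this] with y hy
        rw [← dist_eq_norm]; exact hy
      obtain ⟨r, hr, hball⟩ := Metric.eventually_nhds_iff_ball.1 hev
      refine ⟨Metric.ball x r, mem_nhdsWithin_of_mem_nhds (Metric.ball_mem_nhds _ hr),
        Metric.ball x r, Metric.isOpen_ball, fun y hy => (hball y hy).1, ?_, by simp, ?_⟩
      · rw [frontier_ball _ hr.ne']
        exact Measure.addHaar_sphere _ _ _
      · intro G' hG' hGo
        exact H G' hGo (Metric.isBounded_ball.subset hG') u fun y hy =>
          ⟨(hball y (hG' hy)).1.2.1, (hball y (hG' hy)).2⟩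
  obtain ⟨G, h1, h2, h3, h4, h5⟩ := main
  refine ⟨G, h2.trans inter_subset_left, h5 G le_rfl h1, ?_⟩
  have hs : O \ G ⊆ (O \ O1) ∪ ((O1 \ Cp) ∪ (Cp \ G)) := by
    rintro x ⟨hx, hxG⟩
    by_cases hx1 : x ∈ O1
    · right
      by_cases hxc : x ∈ Cp
      · right; exact ⟨hxc, hxG⟩
      · left; exact ⟨hx1, hxc⟩
    · left; exact ⟨hx, hx1⟩
  refine (measure_mono hs).trans ((measure_union_le _ _).trans ?_)
  rw [hdiff, zero_add]
  refine (measure_union_le _ _).trans ?_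
  rw [h4, add_zero]
  exact hCpm.le

end CI

namespace CI
open Set Filter Topology MeasureTheory

/-- Admissible approximations. -/
def Good (O : Set R2) (U : Set L2) (φ u : R2 → R2) : Prop :=
  (∃ C : NNReal, LipschitzWith C u) ∧ (∀ x, x ∉ O → u =ᶠ[𝓝 x] φ) ∧
    ∀ᵐ x, x ∈ O → ContDiffAt ℝ 1 u x ∧ fderiv ℝ u x ∈ U

/-- difference quotients -/
noncomputable def diffq (u : R2 → R2) (n : ℕ) (x : R2) : Fin 2 → R2 := fun i =>
  (n : ℝ) • (u (x + (n : ℝ)⁻¹ • (Pi.single i 1 : R2)) - u x)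

/-- partial derivatives -/
noncomputable def pd (u : R2 → R2) (x : R2) : Fin 2 → R2 := fun i =>
  fderiv ℝ u x (Pi.single i 1)

lemma diffq_tendsto {u : R2 → R2} {x : R2} (h : DifferentiableAt ℝ u x) :
    Tendsto (fun n => diffq u n x) atTop (𝓝 (pd u x)) := by
  rw [tendsto_pi_nhds]
  intro i
  exact (h.hasFDerivAt.lim_real (Pi.single i 1)).comp tendsto_natCast_atTop_atTop

lemma good_step1 {O : Set R2} {U E : Set L2} {φ u : R2 → R2} (hU : IsOpen U)
    (hUl : ∀ B ∈ U, ∀ C ∈ U, B - C ∈ RankOneDir → segment ℝ B C ⊆ U)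
    (hUE : ∀ ε : ℝ, 0 < ε → ∀ ξ ∈ U, LamHull RankOneDir (U ∩ Metric.thickening ε E) ξ)
    (hO : IsOpen O) (hOb : Bornology.IsBounded O) (hu : Good O U φ u)
    {κ η : ℝ} (hκ : 0 < κ) (hη : 0 < η) :
    ∃ u', Good O U φ u' ∧ (∀ x, ‖u' x - u x‖ ≤ η) ∧
      (∀ x, ‖u' x - u x‖ ≤ κ * Metric.infDist x Oᶜ ^ 2) ∧
      volume {x | x ∈ O ∧ fderiv ℝ u' x ∉ Metric.thickening κ E} ≤ ENNReal.ofReal κ := by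
  obtain ⟨⟨C, hC⟩, h2, h3⟩ := hu
  have hOfin : volume O ≠ ⊤ := hOb.measure_lt_top.ne
  obtain ⟨Cp, hCpO, hCpc, hCpm⟩ := hO.measurableSet.exists_isCompact_sdiff_lt hOfin
    (ε := ENNReal.ofReal (κ / 2)) (by simpa using hκ)
  have hne : (Oᶜ).Nonempty := by
    rw [nonempty_compl]
    rintro rfl
    exact NormedSpace.unbounded_univ ℝ R2 hOb
  have hpos : ∀ x ∈ Cp, 0 < Metric.infDist x Oᶜ := fun x hx =>
    (hO.isClosed_compl.notMem_iff_infDist_pos hne).1 (by simpa using hCpO hx)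
  obtain ⟨τ, hτ, hτC⟩ := hCpc.exists_forall_le' (Metric.continuous_infDist_pt _).continuousOn hpos
  set G : Set R2 := {x | τ / 2 < Metric.infDist x Oᶜ} with hG
  have hGo : IsOpen G := isOpen_lt continuous_const (Metric.continuous_infDist_pt _)
  have hGO : G ⊆ O := by
    intro x hx
    by_contra hxO
    have : Metric.infDist x Oᶜ = 0 := Metric.infDist_zero_of_mem hxO
    simp only [hG, mem_setOf_eq, this] at hx
    linarith
  have himp := impr_open (T := U ∩ Metric.thickening κ E) (O := G) hU
    (hU.inter Metric.isOpen_thickening) inter_subset_left hUl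
    (hUE κ hκ) hGo (hOb.subset hGO) (u := u) (h3.mono fun x hx hxG => hx (hGO hxG))
  obtain ⟨w, ⟨Cw, hCw⟩, hw1, hw2, hw3, hw4⟩ := himp (min η (min (κ / 2) (κ * (τ / 2) ^ 2)))
    (by positivity)
  refine ⟨u + w, ⟨⟨C + Cw, hC.add hCw⟩, ?_, ?_⟩, ?_, ?_, ?_⟩
  · intro x hx
    exact (add_germ0 (hw2 x fun h => hx (hGO h))).trans (h2 x hx)
  · filter_upwards [h3, hw3] with x hx hx' hxO
    by_cases hxG : x ∈ G
    · exact hx' hxG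
    · have e := add_germ0 (u := u) (hw2 x hxG)
      exact ⟨(hx hxO).1.congr_of_eventuallyEq e, by rw [e.fderiv_eq]; exact (hx hxO).2⟩
  · intro x
    simpa using (hw1 x).trans (min_le_left _ _)
  · intro x
    by_cases hxG : x ∈ G
    · have h := (hw1 x).trans ((min_le_right _ _).trans (min_le_right _ _))
      simp only [hG, mem_setOf_eq] at hxG
      have : (τ / 2) ^ 2 ≤ Metric.infDist x Oᶜ ^ 2 := by gcongr
      simpa using h.trans (by gcongr)
    · have := (hw2 x hxG).self_of_nhds
      simp only [Pi.add_apply, this, add_zero, sub_self, norm_zero]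
      positivity
  · have hs : {x | x ∈ O ∧ fderiv ℝ (u + w) x ∉ Metric.thickening κ E} ⊆
        {x | x ∈ G ∧ fderiv ℝ (u + w) x ∉ U ∩ Metric.thickening κ E} ∪ (O \ Cp) := by
      rintro x ⟨hx, hx'⟩
      by_cases hxC : x ∈ Cp
      · left
        exact ⟨lt_of_lt_of_le (by linarith) (hτC x hxC), fun h => hx' h.2⟩
      · right; exact ⟨hx, hxC⟩
    refine (measure_mono hs).trans ((measure_union_le _ _).trans ?_)
    calc _ ≤ ENNReal.ofReal (κ / 2) + ENNReal.ofReal (κ / 2) := by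
          gcongr
          exact hw4.trans (ENNReal.ofReal_le_ofReal ((min_le_right _ _).trans (min_le_left _ _)))
      _ = _ := by rw [← ENNReal.ofReal_add (by positivity) (by positivity)]; congr 1; ring

lemma diffq_meas {O : Set R2} (hOb : Bornology.IsBounded O) {u : R2 → R2} {C : NNReal}
    (hu : LipschitzWith C u) (N : ℝ) {κ : ℝ} (hκ : 0 < κ) :
    ∃ n : ℕ, N ≤ n ∧ volume {x | x ∈ O ∧ κ ≤ ‖diffq u n x - pd u x‖} ≤ ENNReal.ofReal κ := by
  obtain ⟨R, hR⟩ := hOb.subset_closedBall 0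
  set B := Metric.closedBall (0 : R2) R
  haveI : IsFiniteMeasure (volume.restrict B) := ⟨by
    simpa using (Metric.isBounded_closedBall (x := (0:R2)) (r := R)).measure_lt_top⟩
  have h := tendstoInMeasure_of_tendsto_ae (μ := volume.restrict B) (f := fun n => diffq u n)
    (g := pd u) (fun n => by
      have : Continuous (diffq u n) := by
        have := hu.continuous
        unfold diffq
        fun_prop
      exact this.aestronglyMeasurable)
    (ae_restrict_of_ae (hu.ae_differentiableAt.mono fun x hx => diffq_tendsto hx))
  rw [tendstoInMeasure_iff_norm] at h
  have h1 := (h κ hκ).eventually (gt_mem_nhds (by simpa using hκ : (0:ENNReal) < ENNReal.ofReal κ))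
  obtain ⟨n, hn, hn'⟩ := (h1.and (eventually_ge_atTop ⌈N⌉₊)).exists
  refine ⟨n, (Nat.le_ceil N).trans (by exact_mod_cast hn'), ?_⟩
  refine le_trans ?_ hn.le
  rw [Measure.restrict_apply' measurableSet_closedBall]
  exact measure_mono fun x hx => ⟨hx.2, hR hx.1⟩

lemma good_step {O : Set R2} {U E : Set L2} {φ u : R2 → R2} (hU : IsOpen U)
    (hUl : ∀ B ∈ U, ∀ C ∈ U, B - C ∈ RankOneDir → segment ℝ B C ⊆ U)
    (hUE : ∀ ε : ℝ, 0 < ε → ∀ ξ ∈ U, LamHull RankOneDir (U ∩ Metric.thickening ε E) ξ)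
    (hO : IsOpen O) (hOb : Bornology.IsBounded O) (hu : Good O U φ u)
    {κ b : ℝ} (hκ : 0 < κ) (hb : 0 < b) :
    ∃ u' b' n, Good O U φ u' ∧ 0 < b' ∧ b' ≤ b / 2 ∧ (∀ x, ‖u' x - u x‖ ≤ b / 2) ∧
      (∀ x, ‖u' x - u x‖ ≤ κ * Metric.infDist x Oᶜ ^ 2) ∧
      volume {x | x ∈ O ∧ fderiv ℝ u' x ∉ Metric.thickening κ E} ≤ ENNReal.ofReal κ ∧
      1 / κ ≤ (n : ℕ) ∧ b' * n ≤ κ ∧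
      volume {x | x ∈ O ∧ κ ≤ ‖diffq u' n x - pd u' x‖} ≤ ENNReal.ofReal κ := by
  obtain ⟨u', h1, h2, h3, h4⟩ := good_step1 hU hUl hUE hO hOb hu hκ (half_pos hb)
  obtain ⟨C, hC⟩ := h1.1
  obtain ⟨n, hn, hn'⟩ := diffq_meas hOb hC (1 / κ) hκ
  have hnp : (0:ℝ) < n := lt_of_lt_of_le (by positivity) hn
  refine ⟨u', min (b / 2) (κ / n), n, h1, by positivity, min_le_left _ _, h2, h3, h4, hn, ?_, hn'⟩
  calc _ ≤ κ / n * n := by gcongr; exact min_le_right _ _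
    _ = κ := by field_simp

lemma pd_bound (L : L2) {c : ℝ} (h : ∀ i : Fin 2, ‖L (Pi.single i 1)‖ ≤ c) : ‖L‖ ≤ 2 * c := by
  have hc : 0 ≤ c := (norm_nonneg _).trans (h 0)
  refine L.opNorm_le_bound (by positivity) fun x => ?_
  have e : x = ∑ i : Fin 2, x i • (Pi.single i 1 : R2) := by
    ext j; fin_cases j <;> simp
  conv_lhs => rw [e]
  rw [map_sum]
  refine (norm_sum_le _ _).trans ?_
  simp only [map_smul, norm_smul, Fin.sum_univ_two]
  have h0 := norm_le_pi_norm x 0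
  have h1 := norm_le_pi_norm x 1
  have := mul_le_mul h0 (h 0) (norm_nonneg _) (norm_nonneg _)
  have := mul_le_mul h1 (h 1) (norm_nonneg _) (norm_nonneg _)
  linarith

lemma diffq_close {u v : R2 → R2} {b : ℝ} (h : ∀ x, ‖v x - u x‖ ≤ b) (n : ℕ) (x : R2) :
    ‖diffq v n x - diffq u n x‖ ≤ 2 * (b * n) := by
  have hb : 0 ≤ b := (norm_nonneg _).trans (h 0)
  rw [pi_norm_le_iff_of_nonneg (by positivity)]
  intro i
  simp only [diffq, Pi.sub_apply]
  rw [← smul_sub, norm_smul, Real.norm_natCast]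
  have h1 := h (x + (n:ℝ)⁻¹ • Pi.single i 1)
  have h2 := h x
  have : v (x + (n:ℝ)⁻¹ • Pi.single i 1) - v x - (u (x + (n:ℝ)⁻¹ • Pi.single i 1) - u x)
      = (v (x + (n:ℝ)⁻¹ • Pi.single i 1) - u (x + (n:ℝ)⁻¹ • Pi.single i 1)) - (v x - u x) := by abel
  rw [this]
  calc (n:ℝ) * _ ≤ n * (b + b) := by gcongr; exact (norm_sub_le _ _).trans (add_le_add h1 h2)
    _ = _ := by ring

end CI

namespace CI
open Set Filter Topology MeasureTheory

theorem iteration {O : Set R2} {U E : Set L2} {φ : R2 → R2} (hU : IsOpen U)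
    {M1 : ℝ} (hUb : ∀ L ∈ U, ‖L‖ ≤ M1)
    (hUl : ∀ B ∈ U, ∀ C ∈ U, B - C ∈ RankOneDir → segment ℝ B C ⊆ U)
    (hE : IsClosed E)
    (hUE : ∀ ε : ℝ, 0 < ε → ∀ ξ ∈ U, LamHull RankOneDir (U ∩ Metric.thickening ε E) ξ)
    (hO : IsOpen O) (hOb : Bornology.IsBounded O) {Cφ : NNReal} (hφ : LipschitzWith Cφ φ)
    (hφO : ∀ᵐ x, x ∈ O → ContDiffAt ℝ 1 φ x ∧ fderiv ℝ φ x ∈ U) :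
    ∃ (u : R2 → R2) (M : NNReal), LipschitzWith M u ∧
      (∀ x, ‖u x - φ x‖ ≤ Metric.infDist x Oᶜ ^ 2) ∧ ∀ᵐ x, x ∈ O → fderiv ℝ u x ∈ E := by
  let S := {p : (R2 → R2) × ℝ // Good O U φ p.1 ∧ 0 < p.2}
  let κ : ℕ → ℝ := fun k => (1 / 2) ^ (k + 1)
  have hκ : ∀ k, 0 < κ k := fun k => by positivity
  have step : ∀ (k : ℕ) (s : S), ∃ (s' : S) (n : ℕ), s'.1.2 ≤ s.1.2 / 2 ∧
      (∀ x, ‖s'.1.1 x - s.1.1 x‖ ≤ s.1.2 / 2) ∧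
      (∀ x, ‖s'.1.1 x - s.1.1 x‖ ≤ κ k * Metric.infDist x Oᶜ ^ 2) ∧
      volume {x | x ∈ O ∧ fderiv ℝ s'.1.1 x ∉ Metric.thickening (κ k) E} ≤ ENNReal.ofReal (κ k) ∧
      1 / κ k ≤ n ∧ s'.1.2 * n ≤ κ k ∧
      volume {x | x ∈ O ∧ κ k ≤ ‖diffq s'.1.1 n x - pd s'.1.1 x‖} ≤ ENNReal.ofReal (κ k) := by
    intro k s
    obtain ⟨u', b', n, h1, h2, h3⟩ := good_step hU hUl hUE hO hOb s.2.1 (hκ k) s.2.2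
    exact ⟨⟨(u', b'), h1, h2⟩, n, h3⟩
  choose f nn hf using step
  let s0 : S := ⟨(φ, 1), ⟨⟨⟨Cφ, hφ⟩, fun x _ => EventuallyEq.rfl, hφO⟩, one_pos⟩⟩
  let sq : ℕ → S := fun k => Nat.rec s0 (fun k s => f k s) k
  let u : ℕ → R2 → R2 := fun k => (sq k).1.1
  let b : ℕ → ℝ := fun k => (sq k).1.2
  let n : ℕ → ℕ := fun k => nn k (sq k)
  have hg : ∀ k, Good O U φ (u k) := fun k => (sq k).2.1
  have hbp : ∀ k, 0 < b k := fun k => (sq k).2.2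
  have hb : ∀ k, b (k + 1) ≤ b k / 2 := fun k => (hf k (sq k)).1
  have hd : ∀ k x, ‖u (k + 1) x - u k x‖ ≤ b k / 2 := fun k => (hf k (sq k)).2.1
  have hw : ∀ k x, ‖u (k + 1) x - u k x‖ ≤ κ k * Metric.infDist x Oᶜ ^ 2 :=
    fun k => (hf k (sq k)).2.2.1
  have hv1 : ∀ k, volume {x | x ∈ O ∧ fderiv ℝ (u (k+1)) x ∉ Metric.thickening (κ k) E} ≤
    ENNReal.ofReal (κ k) := fun k => (hf k (sq k)).2.2.2.1
  have hn1 : ∀ k, 1 / κ k ≤ n k := fun k => (hf k (sq k)).2.2.2.2.1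
  have hn2 : ∀ k, b (k + 1) * n k ≤ κ k := fun k => (hf k (sq k)).2.2.2.2.2.1
  have hv2 : ∀ k, volume {x | x ∈ O ∧ κ k ≤ ‖diffq (u (k+1)) (n k) x - pd (u (k+1)) x‖} ≤
    ENNReal.ofReal (κ k) := fun k => (hf k (sq k)).2.2.2.2.2.2
  have hu0 : u 0 = φ := rfl
  have hb0 : b 0 = 1 := rfl
  clear_value u b n
  clear hf sq s0 f nn
  have hbk : ∀ k, b k ≤ (1 / 2) ^ k := by
    intro k
    induction k with
    | zero => simp [hb0]
    | succ k ih => rw [pow_succ]; linarith [hb k]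
  have hκ0 : Tendsto κ atTop (𝓝 0) :=
    (tendsto_pow_atTop_nhds_zero_of_lt_one (by norm_num) (by norm_num)).comp (tendsto_add_atTop_nat 1)
  -- the limit
  have hcau : ∀ x, CauchySeq fun k => u k x := by
    intro x
    refine cauchySeq_of_le_geometric_two (C := 1) fun k => ?_
    rw [dist_comm, dist_eq_norm]
    refine (hd k x).trans ?_
    have := hbk k
    rw [one_div_pow] at this
    calc b k / 2 ≤ (1 / 2 ^ k) / 2 := by gcongr
      _ = _ := by ring
  choose v hv using fun x => cauchySeq_tendsto_of_complete (hcau x)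
  have hcl : ∀ k x, ‖v x - u k x‖ ≤ b k := by
    intro k x
    have h1 : ∀ m, ‖u (k + m) x - u k x‖ ≤ b k - b (k + m) := by
      intro m
      induction m with
      | zero => simp
      | succ m ih =>
        have e : u (k + (m + 1)) x - u k x = (u (k + m + 1) x - u (k + m) x) + (u (k + m) x - u k x) := by
          rw [← add_assoc]; abel
        rw [e]
        refine (norm_add_le _ _).trans ?_
        have := hd (k + m) x
        have := hb (k + m)
        rw [← add_assoc]
        linarith
    have h2 : Tendsto (fun m => ‖u (k + m) x - u k x‖) atTop (𝓝 ‖v x - u k x‖) := by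
      have : Tendsto (fun m => u (k + m) x) atTop (𝓝 (v x)) := by
        simpa [add_comm, Function.comp_def] using (hv x).comp (tendsto_add_atTop_nat k)
      exact (this.sub_const _).norm
    exact le_of_tendsto' h2 fun m => (h1 m).trans (by linarith [hbp (k + m)])
  have hwφ : ∀ x, ‖v x - φ x‖ ≤ Metric.infDist x Oᶜ ^ 2 := by
    intro x
    have h1 : ∀ k, ‖u k x - φ x‖ ≤ (1 - (1 / 2) ^ k) * Metric.infDist x Oᶜ ^ 2 := by
      intro k
      induction k with
      | zero => simp [hu0]
      | succ k ih =>
        have e : u (k + 1) x - φ x = (u (k + 1) x - u k x) + (u k x - φ x) := by abel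
        rw [e]
        refine (norm_add_le _ _).trans ((add_le_add (hw k x) ih).trans (le_of_eq ?_))
        simp only [κ]; ring
    refine le_of_tendsto' ((hv x).sub_const (φ x)).norm fun k => (h1 k).trans ?_
    have : (0:ℝ) ≤ (1 / 2) ^ k := by positivity
    nlinarith [sq_nonneg (Metric.infDist x Oᶜ)]
  -- uniform Lipschitz bound
  let M : NNReal := max Cφ (Real.toNNReal M1)
  have hlipk : ∀ k, LipschitzWith M (u k) := by
    intro k
    obtain ⟨⟨C, hC⟩, h2, h3⟩ := hg k
    refine lip_of_ae_bound hC ?_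
    filter_upwards [h3] with x hx
    by_cases hxO : x ∈ O
    · calc _ ≤ M1 := hUb _ (hx hxO).2
        _ ≤ _ := (Real.le_coe_toNNReal _).trans (by exact_mod_cast le_max_right _ _)
    · rw [(h2 x hxO).fderiv_eq]
      exact (norm_fderiv_le_of_lipschitz ℝ hφ).trans (by exact_mod_cast le_max_left _ _)
  have hlipv : LipschitzWith M v := by
    refine LipschitzWith.of_dist_le_mul fun x y => ?_
    exact le_of_tendsto' ((hv x).dist (hv y)) fun k => (hlipk k).dist_le_mul x y
  refine ⟨v, M, hlipv, hwφ, ?_⟩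
  have hsum : ∑' k, ENNReal.ofReal (κ k) ≠ ⊤ := by
    have : Summable κ := by
      have := (summable_nat_add_iff 1).2 (summable_geometric_of_lt_one (r := (1/2:ℝ)) (by norm_num) (by norm_num))
      exact this
    exact this.tsum_ofReal_ne_top
  have hbc1 := ae_eventually_notMem (μ := (volume : Measure R2))
    (ne_top_of_le_ne_top hsum (ENNReal.tsum_le_tsum hv1))
  have hbc2 := ae_eventually_notMem (μ := (volume : Measure R2))
    (ne_top_of_le_ne_top hsum (ENNReal.tsum_le_tsum hv2))
  filter_upwards [hbc1, hbc2, hlipv.ae_differentiableAt] with x h1 h2 h3 hxO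
  have hn : Tendsto n atTop atTop := by
    have : Tendsto (fun k => (n k : ℝ)) atTop atTop := by
      refine tendsto_atTop_mono hn1 ?_
      simp only [one_div]
      exact tendsto_inv_nhdsGT_zero.comp (tendsto_nhdsWithin_iff.2 ⟨hκ0, Eventually.of_forall hκ⟩)
    exact tendsto_natCast_atTop_iff.1 this
  have hq := (diffq_tendsto h3).comp hn
  -- partial derivatives converge
  have hpd : Tendsto (fun k => ‖pd (u (k + 1)) x - pd v x‖) atTop (𝓝 0) := by
    have hq' : Tendsto (fun k => κ k + 2 * κ k + ‖diffq v (n k) x - pd v x‖) atTop (𝓝 0) := by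
      have := (hκ0.add (hκ0.const_mul 2)).add (hq.sub_const (pd v x)).norm
      simpa using this
    refine squeeze_zero' (Eventually.of_forall fun _ => norm_nonneg _) ?_ hq'
    filter_upwards [h2] with k hk
    have hk' : ‖diffq (u (k+1)) (n k) x - pd (u (k+1)) x‖ < κ k := by
      by_contra! hcon
      exact hk ⟨hxO, hcon⟩
    have hc := diffq_close (hcl (k+1)) (n k) x
    have hc2 := hn2 k
    have e : pd (u (k+1)) x - pd v x = (diffq v (n k) x - pd v x)
      - (diffq (u (k+1)) (n k) x - pd (u (k+1)) x) - (diffq v (n k) x - diffq (u (k+1)) (n k) x) := by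
        abel
    rw [e]
    refine (norm_sub_le _ _).trans ((add_le_add (norm_sub_le _ _) le_rfl).trans ?_)
    linarith
  have hfd : Tendsto (fun k => fderiv ℝ (u (k + 1)) x) atTop (𝓝 (fderiv ℝ v x)) := by
    rw [tendsto_iff_norm_sub_tendsto_zero]
    have := hpd.const_mul 2
    rw [mul_zero] at this
    refine squeeze_zero (fun _ => norm_nonneg _) (fun k => ?_) this
    refine pd_bound _ fun i => ?_
    exact norm_le_pi_norm (pd (u (k + 1)) x - pd v x) i
  rw [← hE.closure_eq, Metric.mem_closure_iff]
  intro ε hε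
  have e1 := hfd.eventually (Metric.ball_mem_nhds _ (half_pos hε))
  have e2 := hκ0.eventually (gt_mem_nhds (half_pos hε))
  obtain ⟨k, hk1, hk2, hk3⟩ := (e1.and (e2.and h1)).exists
  have : fderiv ℝ (u (k+1)) x ∈ Metric.thickening (κ k) E := by
    by_contra hcon
    exact hk3 ⟨hxO, hcon⟩
  obtain ⟨z, hz, hz'⟩ := Metric.mem_thickening_iff.1 this
  refine ⟨z, hz, ?_⟩
  rw [dist_comm] at hk1
  linarith [dist_triangle (fderiv ℝ v x) (fderiv ℝ (u (k+1)) x) z]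

end CI

namespace CI
open Set Filter Topology MeasureTheory

lemma LamHull.map {V W : Type*} [AddCommGroup V] [Module ℝ V] [AddCommGroup W] [Module ℝ W]
    {D S : Set V} {D' S' : Set W} (f : V →ₗ[ℝ] W) (hD : ∀ d ∈ D, f d ∈ D')
    (hS : ∀ s ∈ S, f s ∈ S') {ξ : V} (h : LamHull D S ξ) : LamHull D' S' (f ξ) := by
  induction h with
  | base h => exact LamHull.base (hS _ h)
  | step h1 h2 h3 h4 h5 ih1 ih2 =>
    rw [map_add, map_smul, map_smul]
    exact LamHull.step ih1 ih2 (by rw [← map_sub]; exact hD _ h3) h4 h5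

lemma LamHull.seg {V : Type*} [AddCommGroup V] [Module ℝ V] {D S : Set V} {B C : V}
    (hB : LamHull D S B) (hC : LamHull D S C) (h : B - C ∈ D) {t : ℝ} (h0 : 0 ≤ t) (h1 : t ≤ 1) :
    LamHull D S (t • B + (1 - t) • C) := by
  rcases h0.eq_or_lt with rfl | h0
  · simpa using hC
  rcases h1.eq_or_lt with rfl | h1
  · simpa using hB
  exact LamHull.step hB hC h h0 h1

/-- rank one directions in conformal coordinates -/
def DC : Set (ℂ × ℂ) := {p | ‖p.1‖ = ‖p.2‖}

/-- The isotropic set in conformal coordinates -/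
def FC (K : Set (ℝ × ℝ)) : Set (ℂ × ℂ) := {p | (|‖p.1‖ - ‖p.2‖|, ‖p.1‖ + ‖p.2‖) ∈ K}

lemma exists_rot {a a' : ℂ} (h : ‖a'‖ = ‖a‖) : ∃ ζ : ℂ, ‖ζ‖ = 1 ∧ a' = ζ * a := by
  by_cases ha : a = 0
  · subst ha
    refine ⟨1, by simp, ?_⟩
    simpa using h
  · refine ⟨a' / a, ?_, by field_simp⟩
    rw [norm_div, h, div_self (by simpa using ha)]

variable {K : Set (ℝ × ℝ)}

lemma lam_norm {a b a' b' : ℂ} (h : LamHull DC (FC K) (a, b)) (h1 : ‖a'‖ = ‖a‖) (h2 : ‖b'‖ = ‖b‖) :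
    LamHull DC (FC K) (a', b') := by
  obtain ⟨ζ, hζ, rfl⟩ := exists_rot h1
  obtain ⟨ω, hω, rfl⟩ := exists_rot h2
  refine h.map (f := (LinearMap.mulLeft ℝ ζ).prodMap (LinearMap.mulLeft ℝ ω)) ?_ ?_
  · rintro ⟨c, d⟩ hd
    simpa [DC, hζ, hω] using hd
  · rintro ⟨c, d⟩ hd
    simpa [FC, hζ, hω] using hd

lemma lam_swap {a b : ℂ} (h : LamHull DC (FC K) (a, b)) : LamHull DC (FC K) (b, a) := by
  refine h.map (f := (LinearEquiv.prodComm ℝ ℂ ℂ).toLinearMap) ?_ ?_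
  · rintro ⟨c, d⟩ hd
    simpa [DC, eq_comm] using hd
  · rintro ⟨c, d⟩ hd
    simpa [FC, abs_sub_comm, add_comm] using hd

/-- `diag (x,y)` lies in the lamination hull. -/
def Q (K : Set (ℝ × ℝ)) (x y : ℝ) : Prop :=
  LamHull DC (FC K) ((((x + y) / 2 : ℝ) : ℂ), (((y - x) / 2 : ℝ) : ℂ))

lemma Q.negx {x y : ℝ} (h : Q K x y) : Q K (-x) y := by
  have := lam_swap h
  unfold Q
  convert this using 3 <;> ring

lemma Q.swap {x y : ℝ} (h : Q K x y) : Q K y x := by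
  refine lam_norm h ?_ ?_
  · rw [add_comm]
  · rw [Complex.norm_real, Complex.norm_real, ← norm_neg]; congr 1; ring

lemma Q.rectx {x0 x y : ℝ} (h : Q K x0 y) (hx : |x| ≤ x0) : Q K x y := by
  have hx' := abs_le.1 hx
  rcases (show 0 ≤ x0 from (abs_nonneg x).trans hx).eq_or_lt with h0 | h0
  · have : x = x0 := by linarith
    rwa [this]
  have h2 := LamHull.seg h h.negx (t := (x + x0) / (2 * x0)) ?_ ?_ ?_
  · unfold Q
    convert h2 using 1
    refine Prod.ext ?_ ?_
    · simp only [Prod.fst_add, Prod.smul_fst, Complex.real_smul]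
      norm_cast
      field_simp; ring
    · simp only [Prod.snd_add, Prod.smul_snd, Complex.real_smul]
      norm_cast
      field_simp; ring
  · simp only [DC, mem_setOf_eq, Prod.fst_sub, Prod.snd_sub]
    norm_cast
    rw [← norm_neg]; congr 1; ring
  · exact div_nonneg (by linarith) (by linarith)
  · rw [div_le_one (by linarith)]; linarith

lemma Q.rect {x0 y0 x y : ℝ} (h : Q K x0 y0) (hx : |x| ≤ x0) (hy : |y| ≤ y0) : Q K x y :=
  ((h.rectx hx).swap.rectx hy).swap

lemma lam_line {θ k b1 b2 b : ℝ} (h1 : LamHull DC (FC K) (⟨b1 - θ, k⟩, (b1 : ℂ)))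
    (h2 : LamHull DC (FC K) (⟨b2 - θ, k⟩, (b2 : ℂ))) (hb1 : b1 ≤ b) (hb2 : b ≤ b2) :
    LamHull DC (FC K) (⟨b - θ, k⟩, (b : ℂ)) := by
  rcases (hb1.trans hb2).eq_or_lt with h0 | h0
  · have : b = b1 := by linarith
    rwa [this]
  have h3 := LamHull.seg h1 h2 (t := (b2 - b) / (b2 - b1)) ?_ ?_ ?_
  · have hne : b2 - b1 ≠ 0 := by linarith
    set t := (b2 - b) / (b2 - b1) with ht
    have hb : b = t * b1 + (1 - t) * b2 := by rw [ht]; field_simp; ring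
    clear_value t
    convert h3 using 1
    refine Prod.ext ?_ ?_
    · apply Complex.ext
      · simp only [Prod.fst_add, Prod.smul_fst, Complex.add_re, Complex.smul_re, smul_eq_mul]
        rw [hb]; ring
      · simp only [Prod.fst_add, Prod.smul_fst, Complex.add_im, Complex.smul_im, smul_eq_mul]
        ring
    · simp only [Prod.snd_add, Prod.smul_snd, Complex.real_smul]
      norm_cast
  · simp only [DC, mem_setOf_eq, Prod.fst_sub, Prod.snd_sub]
    congr 1
    apply Complex.ext <;> simp
  · exact div_nonneg (by linarith) (by linarith)
  · rw [div_le_one (by linarith)]; linarith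

lemma norm_line {x y θ k : ℝ} (hk : k ^ 2 = (x + θ) * (y - θ)) (hxy : 0 ≤ x + y) :
    ‖(⟨(y - x) / 2 - θ, k⟩ : ℂ)‖ = ‖(((x + y) / 2 : ℝ) : ℂ)‖ := by
  rw [Complex.norm_real, Real.norm_of_nonneg (by linarith), Complex.norm_def, Complex.normSq_mk,
    Real.sqrt_eq_iff_mul_self_eq (add_nonneg (mul_self_nonneg _) (mul_self_nonneg _)) (by linarith)]
  nlinarith

lemma Q_line {x1 y1 x2 y2 x y θ κ : ℝ} (h1 : Q K x1 y1) (h2 : Q K x2 y2) (hκ : 0 ≤ κ)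
    (e1 : (x1 + θ) * (y1 - θ) = κ) (e2 : (x2 + θ) * (y2 - θ) = κ) (e : (x + θ) * (y - θ) = κ)
    (p1 : 0 ≤ x1 + y1) (p2 : 0 ≤ x2 + y2) (p : 0 ≤ x + y)
    (b1 : y1 - x1 ≤ y - x) (b2 : y - x ≤ y2 - x2) : Q K x y := by
  have hk : √κ ^ 2 = κ := Real.sq_sqrt hκ
  have h1' := lam_norm h1 (norm_line (hk.trans e1.symm) p1) rfl
  have h2' := lam_norm h2 (norm_line (hk.trans e2.symm) p2) rfl
  have h3 := lam_line (b := (y - x) / 2) h1' h2' (by linarith) (by linarith)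
  exact lam_norm h3 (norm_line (hk.trans e.symm) p).symm rfl

lemma Q_dom {x0 y0 x y : ℝ} (h : Q K x0 y0) (h0 : 0 ≤ x0) (hx : 0 ≤ x) (hxy : x ≤ y)
    (hy : y ≤ y0) (hp : x * y ≤ x0 * y0) : Q K x y := by
  rcases le_or_gt x x0 with hc | hc
  · exact h.rect (by rwa [abs_of_nonneg hx]) (by rwa [abs_of_nonneg (hx.trans hxy)])
  have hx' : 0 < x := by linarith
  have hy0 : 0 ≤ y0 := by linarith
  have e : x * (x0 * y0 / x) = x0 * y0 := by field_simp
  have h1 : y ≤ x0 * y0 / x := by rw [le_div_iff₀ hx']; linarith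
  have h2 : x0 * y0 / x ≤ y0 := by rw [div_le_iff₀ hx']; nlinarith
  have h3 : Q K x (x0 * y0 / x) := by
    refine Q_line (θ := 0) (κ := x0 * y0) h.swap h (by positivity) (by ring) (by ring) (by rw [add_zero, sub_zero, e])
      (by linarith) (by linarith) (by linarith) (by linarith) (by linarith)
  exact h3.rect (by rw [abs_of_pos hx']) (by rwa [abs_of_nonneg (by linarith)])

lemma Q_of_mem {x y : ℝ} (h : (x, y) ∈ K) (hx : 0 ≤ x) (hxy : x ≤ y) : Q K x y := by
  refine LamHull.base ?_
  simp only [FC, mem_setOf_eq, Complex.norm_real]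
  rw [Real.norm_of_nonneg (by linarith), Real.norm_of_nonneg (by linarith)]
  convert h using 2
  · rw [show (x + y) / 2 - (y - x) / 2 = x by ring, abs_of_nonneg hx]
  · ring

lemma lam_of_Q {a b : ℂ} (h : Q K |‖a‖ - ‖b‖| (‖a‖ + ‖b‖)) : LamHull DC (FC K) (a, b) := by
  rcases le_total ‖b‖ ‖a‖ with hc | hc
  · rw [abs_of_nonneg (by linarith)] at h
    refine lam_norm h ?_ ?_
    · rw [Complex.norm_real, Real.norm_of_nonneg]
      · ring
      · linarith [norm_nonneg a, norm_nonneg b]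
    · rw [Complex.norm_real, Real.norm_of_nonneg]
      · ring
      · linarith [norm_nonneg a, norm_nonneg b]
  · rw [abs_of_nonpos (by linarith)] at h
    refine lam_swap (lam_norm h ?_ ?_)
    · rw [Complex.norm_real, Real.norm_of_nonneg]
      · ring
      · linarith [norm_nonneg a, norm_nonneg b]
    · rw [Complex.norm_real, Real.norm_of_nonneg]
      · ring
      · linarith [norm_nonneg a, norm_nonneg b]

lemma prod_abs (a b : ℂ) : |‖a‖ - ‖b‖| * (‖a‖ + ‖b‖) = |‖a‖ ^ 2 - ‖b‖ ^ 2| := by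
  have h : ‖a‖ ^ 2 - ‖b‖ ^ 2 = (‖a‖ - ‖b‖) * (‖a‖ + ‖b‖) := by ring
  rw [h, abs_mul, abs_of_nonneg (show 0 ≤ ‖a‖ + ‖b‖ by positivity)]

lemma abs_le_sum (a b : ℂ) : |‖a‖ - ‖b‖| ≤ ‖a‖ + ‖b‖ := by
  rw [abs_le]; constructor <;> linarith [norm_nonneg a, norm_nonneg b]

/-- Strict contractions of `F` are interior points of the lamination hull. -/
lemma scale_interior (hK : K ⊆ {p : ℝ × ℝ | 0 < p.1 ∧ p.1 ≤ p.2}) {p : ℂ × ℂ} (hp : p ∈ FC K)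
    {s : ℝ} (h0 : 0 < s) (h1 : s < 1) : s • p ∈ interior {q | LamHull DC (FC K) q} := by
  obtain ⟨a0, b0⟩ := p
  have hm : (|‖a0‖ - ‖b0‖|, ‖a0‖ + ‖b0‖) ∈ K := hp
  set x0 := |‖a0‖ - ‖b0‖| with hx0
  set y0 := ‖a0‖ + ‖b0‖ with hy0
  have hpos : 0 < x0 := (hK hm).1
  have hle : x0 ≤ y0 := (hK hm).2
  have hypos : 0 < y0 := by linarith
  rw [mem_interior]
  refine ⟨{q | ‖q.1‖ + ‖q.2‖ < y0 ∧ |‖q.1‖ ^ 2 - ‖q.2‖ ^ 2| < x0 * y0}, ?_, ?_, ?_, ?_⟩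
  · rintro ⟨a, b⟩ ⟨h2, h3⟩
    refine lam_of_Q (Q_dom (Q_of_mem hm hpos.le hle) hpos.le (abs_nonneg _) (abs_le_sum a b) h2.le ?_)
    rw [prod_abs]; exact h3.le
  · have c1 : Continuous fun q : ℂ × ℂ => ‖q.1‖ + ‖q.2‖ := by fun_prop
    have c2 : Continuous fun q : ℂ × ℂ => |‖q.1‖ ^ 2 - ‖q.2‖ ^ 2| := by fun_prop
    exact (isOpen_lt c1 continuous_const).inter (isOpen_lt c2 continuous_const)
  · simp only [Prod.smul_mk, norm_smul, Real.norm_of_nonneg h0.le]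
    rw [← mul_add]
    calc s * y0 < 1 * y0 := by gcongr
      _ = y0 := one_mul _
  · simp only [Prod.smul_mk, norm_smul, Real.norm_of_nonneg h0.le]
    have e : |(s * ‖a0‖) ^ 2 - (s * ‖b0‖) ^ 2| = s ^ 2 * (x0 * y0) := by
      have h : (s * ‖a0‖) ^ 2 - (s * ‖b0‖) ^ 2 = s ^ 2 * (‖a0‖ ^ 2 - ‖b0‖ ^ 2) := by ring
      rw [hx0, hy0, prod_abs, h, abs_mul, abs_of_nonneg (sq_nonneg s)]
    rw [e]
    have : s ^ 2 < 1 := by nlinarith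
    have hxy : 0 < x0 * y0 := by positivity
    nlinarith

end CI

namespace CI
open Set Filter Topology MeasureTheory

/-- the separating functions -/
def fth (θ : ℝ) (p : ℝ × ℝ) : ℝ := p.1 * p.2 + θ * (p.2 - p.1)

lemma fth_eq (θ : ℝ) (p : ℝ × ℝ) : fth θ p = (p.1 + θ) * (p.2 - θ) + θ ^ 2 := by
  unfold fth; ring

lemma fth_cont : Continuous fun z : ℝ × (ℝ × ℝ) => fth z.1 z.2 := by
  unfold fth; fun_prop

lemma maxset_closed {K : Set (ℝ × ℝ)} (hKc : IsCompact K) (Y : ℝ) {C : Set (ℝ × ℝ)}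
    (hC : IsClosed C) :
    IsClosed {θ : ℝ | θ ∈ Icc 0 Y ∧ ∃ p ∈ K, (∀ q ∈ K, fth θ q ≤ fth θ p) ∧ p ∈ C} := by
  have h : IsCompact ((Icc 0 Y ×ˢ K) ∩
      ({z : ℝ × (ℝ × ℝ) | ∀ q ∈ K, fth z.1 q ≤ fth z.1 z.2} ∩ Prod.snd ⁻¹' C)) := by
    refine (isCompact_Icc.prod hKc).inter_right (IsClosed.inter ?_ (hC.preimage continuous_snd))
    have e : {z : ℝ × (ℝ × ℝ) | ∀ q ∈ K, fth z.1 q ≤ fth z.1 z.2} =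
        ⋂ q ∈ K, {z : ℝ × (ℝ × ℝ) | fth z.1 q ≤ fth z.1 z.2} := by
      ext z; simp
    rw [e]
    refine isClosed_biInter fun q _ => isClosed_le ?_ fth_cont
    unfold fth; fun_prop
  convert (h.image continuous_fst).isClosed using 1
  ext θ
  constructor
  · rintro ⟨h1, p, hp, h2, h3⟩
    exact ⟨(θ, p), ⟨⟨h1, hp⟩, h2, h3⟩, rfl⟩
  · rintro ⟨⟨θ', p⟩, ⟨⟨h1, hp⟩, h2, h3⟩, rfl⟩
    exact ⟨h1, p, hp, h2, h3⟩

lemma Q_of_sep {K : Set (ℝ × ℝ)} (hKc : IsCompact K)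
    (hK : K ⊆ {p : ℝ × ℝ | 0 < p.1 ∧ p.1 ≤ p.2}) {P : ℝ × ℝ} (hP : P ∈ K)
    (hPm : ∀ q ∈ K, q.2 ≤ P.2) {x y : ℝ} (hx : 0 ≤ x) (hxy : x ≤ y) (hy : y < P.2)
    (hsep : ∀ θ ∈ Icc 0 P.2, ∀ p ∈ K, (∀ q ∈ K, fth θ q ≤ fth θ p) → fth θ (x, y) ≤ fth θ p) :
    Q K x y := by
  set Y := P.2 with hY
  have hY0 : 0 < Y := by linarith
  let A : Set ℝ := {θ : ℝ | θ ∈ Icc 0 Y ∧ ∃ p ∈ K, (∀ q ∈ K, fth θ q ≤ fth θ p) ∧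
    p ∈ {p : ℝ × ℝ | p.2 ≤ y}}
  let B : Set ℝ := {θ : ℝ | θ ∈ Icc 0 Y ∧ ∃ p ∈ K, (∀ q ∈ K, fth θ q ≤ fth θ p) ∧
    p ∈ {p : ℝ × ℝ | y ≤ p.2}}
  have hA : IsClosed A := maxset_closed hKc Y (isClosed_le continuous_snd continuous_const)
  have hB : IsClosed B := maxset_closed hKc Y (isClosed_le continuous_const continuous_snd)
  have hcov : Icc 0 Y ⊆ A ∪ B := by
    intro θ hθ
    obtain ⟨p, hp, hmax⟩ := hKc.exists_isMaxOn ⟨P, hP⟩ (f := fth θ)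
      (Continuous.continuousOn (by unfold fth; fun_prop))
    rcases le_total p.2 y with h | h
    · exact Or.inl ⟨hθ, p, hp, fun q hq => hmax hq, h⟩
    · exact Or.inr ⟨hθ, p, hp, fun q hq => hmax hq, h⟩
  have hYB : Y ∈ B := by
    refine ⟨⟨hY0.le, le_rfl⟩, P, hP, fun q hq => ?_, hy.le⟩
    rw [fth_eq, fth_eq, ← hY]
    have h1 := hPm q hq
    have h2 := (hK hq).1
    nlinarith
  by_cases h0B : (0:ℝ) ∈ B
  · obtain ⟨h0, p, hp, hmax, hpy⟩ := h0B
    have := hsep 0 h0 p hp hmax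
    simp only [fth, zero_mul, add_zero] at this
    exact Q_dom (Q_of_mem (x := p.1) (y := p.2) hp (hK hp).1.le (hK hp).2) (hK hp).1.le hx hxy hpy this
  have h0A : (0:ℝ) ∈ A := (hcov ⟨le_rfl, hY0.le⟩).resolve_right h0B
  obtain ⟨θ, hθ, ⟨-, p, hp, hpm, hpy⟩, ⟨-, q, hq, hqm, hqy⟩⟩ :=
    isPreconnected_closed_iff.1 (isPreconnected_Icc (a := 0) (b := Y)) A B hA hB hcov
      ⟨0, ⟨le_rfl, hY0.le⟩, h0A⟩ ⟨Y, ⟨hY0.le, le_rfl⟩, hYB⟩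
  simp only [mem_setOf_eq] at hpy hqy
  have hpq : fth θ p = fth θ q := le_antisymm (hqm p hp) (hpm q hq)
  have hpP := hpm P hP
  have hs := hsep θ hθ p hp hpm
  rw [fth_eq, fth_eq] at hpq hpP hs
  simp only at hs
  set κ := (p.1 + θ) * (p.2 - θ) with hκ
  have hp1 := (hK hp).1
  have hq1 := (hK hq).1
  have hP1 := (hK hP).1
  have hp2 := (hK hp).2
  have hq2 := (hK hq).2
  have hqκ : (q.1 + θ) * (q.2 - θ) = κ := by linarith
  have hPκ : (P.1 + θ) * (Y - θ) ≤ κ := by linarith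
  have hsκ : (x + θ) * (y - θ) ≤ κ := by linarith
  have hθ0 := hθ.1
  have hκ0 : 0 < κ := by
    rcases hθ.2.eq_or_lt with h | h
    · exfalso
      rw [h, sub_self, mul_zero] at hPκ
      rw [hκ, h] at hPκ
      have : p.2 - Y < 0 := by linarith
      nlinarith
    · have : 0 < (P.1 + θ) * (Y - θ) := mul_pos (by linarith) (by linarith)
      linarith
  have hpθ : 0 < p.2 - θ := pos_of_mul_pos_right hκ0 (by linarith)
  have hyθ : 0 < y - θ := by linarith
  have hqθ : 0 < q.2 - θ := by linarith
  have ex : (κ / (y - θ) - θ + θ) * (y - θ) = κ := by field_simp; ring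
  have hxx : x ≤ κ / (y - θ) - θ := by
    have : x + θ ≤ κ / (y - θ) := by rwa [le_div_iff₀ hyθ]
    linarith
  have hxp : κ / (y - θ) - θ ≤ p.1 := by
    have : κ / (y - θ) ≤ p.1 + θ := by
      rw [div_le_iff₀ hyθ, hκ]; gcongr
    linarith
  have hxq : q.1 ≤ κ / (y - θ) - θ := by
    have : q.1 + θ ≤ κ / (y - θ) := by
      rw [le_div_iff₀ hyθ, ← hqκ]; gcongr
    linarith
  have hQ : Q K (κ / (y - θ) - θ) y :=
    Q_line (θ := θ) (κ := κ) (Q_of_mem (x := p.1) (y := p.2) hp hp1.le hp2)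
      (Q_of_mem (x := q.1) (y := q.2) hq hq1.le hq2) hκ0.le hκ.symm hqκ ex
      (by linarith) (by linarith) (by linarith) (by linarith) (by linarith)
  exact hQ.rect (by rwa [abs_of_nonneg hx]) (by rw [abs_of_nonneg (by linarith)])

end CI

namespace CI
open Set Filter Topology MeasureTheory

abbrev M2 := Matrix (Fin 2) (Fin 2) ℝ

lemma det_zero_form {ξ : M2} (h : ξ.det = 0) :
    ∃ w v : Fin 2 → ℝ, v ≠ 0 ∧ ξ = Matrix.vecMulVec w v := by
  rw [Matrix.det_fin_two] at h
  by_cases h0 : ξ 0 = 0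
  · by_cases h1 : ξ 1 = 0
    · refine ⟨0, ![1, 0], fun h => by simpa using congrFun h 0, ?_⟩
      ext i j
      fin_cases i
      · simpa [Matrix.vecMulVec_apply] using congrFun h0 j
      · simpa [Matrix.vecMulVec_apply] using congrFun h1 j
    · refine ⟨![0, 1], ξ 1, h1, ?_⟩
      ext i j
      fin_cases i
      · simpa [Matrix.vecMulVec_apply] using congrFun h0 j
      · simp [Matrix.vecMulVec_apply]
  · by_cases h00 : ξ 0 0 = 0
    · have h01 : ξ 0 1 ≠ 0 := by
        intro h01
        apply h0
        ext j; fin_cases j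
        · exact h00
        · exact h01
      refine ⟨![1, ξ 1 1 / ξ 0 1], ξ 0, h0, ?_⟩
      have h10 : ξ 1 0 = 0 := by
        rw [h00, zero_mul, zero_sub, neg_eq_zero] at h
        exact (mul_eq_zero.1 h).resolve_left h01
      ext i j
      fin_cases i <;> fin_cases j <;> simp [Matrix.vecMulVec_apply, h00, h10, h01]
    · refine ⟨![1, ξ 1 0 / ξ 0 0], ξ 0, h0, ?_⟩
      ext i j
      fin_cases i <;> fin_cases j <;> simp [Matrix.vecMulVec_apply, h00]
      field_simp
      linarith

lemma rank_one_of_det {ξ : M2} (h : ξ.det = 0) (hne : ξ ≠ 0) : ξ.rank = 1 := by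
  obtain ⟨w, v, -, e⟩ := det_zero_form h
  have h1 : ξ.rank ≤ 1 := by rw [e]; exact Matrix.rank_vecMulVec_le w v
  have h2 : ξ.rank ≠ 0 := by
    intro h0
    unfold Matrix.rank at h0
    rw [Submodule.finrank_eq_zero, LinearMap.range_eq_bot] at h0
    apply hne
    have : Matrix.mulVecLin ξ = Matrix.mulVecLin 0 := by rw [h0, Matrix.mulVecLin_zero]
    exact Matrix.toLin'.injective this
  omega

lemma det_of_rank_one {ξ : M2} (h : ξ.rank = 1) : ξ.det = 0 := by
  by_contra hne
  have := Matrix.rank_of_isUnit ξ ((Matrix.isUnit_iff_isUnit_det ξ).2 (isUnit_iff_ne_zero.2 hne))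
  rw [h] at this
  simp at this

/-- conformal coordinates -/
noncomputable def conf : M2 ≃ₗ[ℝ] ℂ × ℂ where
  toFun ξ := (⟨(ξ 0 0 + ξ 1 1) / 2, (ξ 1 0 - ξ 0 1) / 2⟩, ⟨(ξ 0 0 - ξ 1 1) / 2, (ξ 0 1 + ξ 1 0) / 2⟩)
  invFun p := !![p.1.re + p.2.re, p.2.im - p.1.im; p.1.im + p.2.im, p.1.re - p.2.re]
  map_add' ξ η := by
    refine Prod.ext (Complex.ext ?_ ?_) (Complex.ext ?_ ?_) <;> simp <;> ring
  map_smul' c ξ := by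
    refine Prod.ext (Complex.ext ?_ ?_) (Complex.ext ?_ ?_) <;> simp <;> ring
  left_inv ξ := by
    ext i j
    fin_cases i <;> fin_cases j <;> simp <;> ring
  right_inv p := by
    refine Prod.ext (Complex.ext ?_ ?_) (Complex.ext ?_ ?_) <;> simp <;> ring

lemma conf_sq1 (ξ : M2) : ‖(conf ξ).1‖ ^ 2 = ((ξ 0 0 + ξ 1 1) / 2) ^ 2 + ((ξ 1 0 - ξ 0 1) / 2) ^ 2 := by
  rw [← Complex.normSq_eq_norm_sq, Complex.normSq_apply]
  simp only [conf, LinearEquiv.coe_mk, LinearMap.coe_mk, AddHom.coe_mk]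
  ring

lemma conf_sq2 (ξ : M2) : ‖(conf ξ).2‖ ^ 2 = ((ξ 0 0 - ξ 1 1) / 2) ^ 2 + ((ξ 0 1 + ξ 1 0) / 2) ^ 2 := by
  rw [← Complex.normSq_eq_norm_sq, Complex.normSq_apply]
  simp only [conf, LinearEquiv.coe_mk, LinearMap.coe_mk, AddHom.coe_mk]
  ring

lemma conf_det (ξ : M2) : ξ.det = ‖(conf ξ).1‖ ^ 2 - ‖(conf ξ).2‖ ^ 2 := by
  rw [conf_sq1, conf_sq2, Matrix.det_fin_two]; ring

lemma conf_frob (ξ : M2) : frobSq ξ = 2 * (‖(conf ξ).1‖ ^ 2 + ‖(conf ξ).2‖ ^ 2) := by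
  rw [conf_sq1, conf_sq2]
  simp only [frobSq, Fin.sum_univ_two]; ring

lemma conf_lam (ξ : M2) : lam1 ξ = |‖(conf ξ).1‖ - ‖(conf ξ).2‖| ∧
    lam2 ξ = ‖(conf ξ).1‖ + ‖(conf ξ).2‖ := by
  unfold lam1 lam2
  rw [conf_frob, conf_det]
  set α := ‖(conf ξ).1‖ with hα
  set β := ‖(conf ξ).2‖ with hβ
  have h1 : 0 ≤ α := norm_nonneg _
  have h2 : 0 ≤ β := norm_nonneg _
  clear_value α β
  rcases le_total β α with h | h
  · rw [abs_of_nonneg (show 0 ≤ α ^ 2 - β ^ 2 by nlinarith), abs_of_nonneg (show 0 ≤ α - β by linarith),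
      show 2 * (α ^ 2 + β ^ 2) + 2 * (α ^ 2 - β ^ 2) = (2 * α) ^ 2 by ring,
      show 2 * (α ^ 2 + β ^ 2) - 2 * (α ^ 2 - β ^ 2) = (2 * β) ^ 2 by ring,
      Real.sqrt_sq (by linarith), Real.sqrt_sq (by linarith)]
    constructor <;> ring
  · rw [abs_of_nonpos (show α ^ 2 - β ^ 2 ≤ 0 by nlinarith), abs_of_nonpos (show α - β ≤ 0 by linarith),
      show 2 * (α ^ 2 + β ^ 2) + 2 * -(α ^ 2 - β ^ 2) = (2 * β) ^ 2 by ring,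
      show 2 * (α ^ 2 + β ^ 2) - 2 * -(α ^ 2 - β ^ 2) = (2 * α) ^ 2 by ring,
      Real.sqrt_sq (by linarith), Real.sqrt_sq (by linarith)]
    constructor <;> ring

lemma mem_E_iff (K : Set (ℝ × ℝ)) (ξ : M2) : ξ ∈ {ξ : M2 | (lam1 ξ, lam2 ξ) ∈ K} ↔ conf ξ ∈ FC K := by
  simp only [FC, mem_setOf_eq]
  rw [(conf_lam ξ).1, (conf_lam ξ).2]

/-- degenerate directions -/
def DM : Set M2 := {ξ | ξ.det = 0}

lemma conf_DM (ξ : M2) : ξ ∈ DM ↔ conf ξ ∈ DC := by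
  simp only [DM, DC, mem_setOf_eq, conf_det, sub_eq_zero]
  rw [sq_eq_sq₀ (norm_nonneg _) (norm_nonneg _)]

lemma rc_seg {E : Set M2} {ξ η : M2} (h1 : ξ ∈ rcHull E) (h2 : η ∈ rcHull E) (hd : ξ - η ∈ DM)
    {t : ℝ} (h0 : 0 ≤ t) (ht : t ≤ 1) : t • ξ + (1 - t) • η ∈ rcHull E := by
  by_cases he : ξ - η = 0
  · rw [sub_eq_zero] at he
    subst he
    rw [← add_smul]; simpa using h1
  intro f hf hfE
  have := hf ξ η t ⟨h0, ht⟩ (rank_one_of_det hd he)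
  have a1 := h1 f hf hfE
  have a2 := h2 f hf hfE
  nlinarith

lemma lam_sub_rc {E : Set M2} {ξ : M2} (h : LamHull DM E ξ) : ξ ∈ rcHull E := by
  induction h with
  | base h => exact fun f _ hfE => hfE _ h
  | step h1 h2 h3 h4 h5 ih1 ih2 => exact rc_seg ih1 ih2 h3 h4.le h5.le

lemma interior_rc_seg {E : Set M2} {ξ η : M2} (h1 : ξ ∈ interior (rcHull E))
    (h2 : η ∈ interior (rcHull E)) (hd : ξ - η ∈ DM)
    {t : ℝ} (h0 : 0 ≤ t) (ht : t ≤ 1) : t • ξ + (1 - t) • η ∈ interior (rcHull E) := by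
  rw [mem_interior_iff_mem_nhds] at *
  have c1 : Tendsto (fun ζ : M2 => ξ + (ζ - (t • ξ + (1 - t) • η))) (𝓝 (t • ξ + (1 - t) • η)) (𝓝 ξ) := by
    have : Continuous (fun ζ : M2 => ξ + (ζ - (t • ξ + (1 - t) • η))) := by fun_prop
    simpa using this.tendsto (t • ξ + (1 - t) • η)
  have c2 : Tendsto (fun ζ : M2 => η + (ζ - (t • ξ + (1 - t) • η))) (𝓝 (t • ξ + (1 - t) • η)) (𝓝 η) := by
    have : Continuous (fun ζ : M2 => η + (ζ - (t • ξ + (1 - t) • η))) := by fun_prop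
    simpa using this.tendsto (t • ξ + (1 - t) • η)
  filter_upwards [c1 h1, c2 h2] with ζ e1 e2
  have := rc_seg e1 e2 (by simpa using hd) h0 ht
  convert this using 1
  module

lemma det_seg (ξ η : M2) (t : ℝ) : (t • ξ + (1 - t) • η).det =
    t * ξ.det + (1 - t) * η.det - t * (1 - t) * (ξ - η).det := by
  simp only [Matrix.det_fin_two, Matrix.add_apply, Matrix.smul_apply, Matrix.sub_apply, smul_eq_mul]
  ring

lemma conf_seg1 (ξ η : M2) {t : ℝ} (ht : t ∈ Icc (0:ℝ) 1) :
    ‖(conf (t • ξ + (1 - t) • η)).1‖ ≤ t * ‖(conf ξ).1‖ + (1 - t) * ‖(conf η).1‖ := by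
  rw [map_add, map_smul, map_smul, Prod.fst_add, Prod.smul_fst, Prod.smul_fst]
  refine (norm_add_le _ _).trans ?_
  rw [norm_smul, norm_smul, Real.norm_of_nonneg ht.1, Real.norm_of_nonneg (by linarith [ht.2])]

lemma conf_seg2 (ξ η : M2) {t : ℝ} (ht : t ∈ Icc (0:ℝ) 1) :
    ‖(conf (t • ξ + (1 - t) • η)).2‖ ≤ t * ‖(conf ξ).2‖ + (1 - t) * ‖(conf η).2‖ := by
  rw [map_add, map_smul, map_smul, Prod.snd_add, Prod.smul_snd, Prod.smul_snd]
  refine (norm_add_le _ _).trans ?_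
  rw [norm_smul, norm_smul, Real.norm_of_nonneg ht.1, Real.norm_of_nonneg (by linarith [ht.2])]

lemma roc1 {θ : ℝ} (hθ : 0 ≤ θ) (c : ℝ) :
    RankOneConvex fun ξ => ξ.det + 2 * θ * ‖(conf ξ).2‖ - c := by
  intro ξ η t ht hr
  have := mul_le_mul_of_nonneg_left (conf_seg2 ξ η ht) hθ
  simp only [det_seg, det_of_rank_one hr]
  linarith

lemma roc2 {θ : ℝ} (hθ : 0 ≤ θ) (c : ℝ) :
    RankOneConvex fun ξ => -ξ.det + 2 * θ * ‖(conf ξ).1‖ - c := by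
  intro ξ η t ht hr
  have := mul_le_mul_of_nonneg_left (conf_seg1 ξ η ht) hθ
  simp only [det_seg, det_of_rank_one hr]
  linarith

lemma roc3 (c : ℝ) : RankOneConvex fun ξ => ‖(conf ξ).1‖ + ‖(conf ξ).2‖ - c := by
  intro ξ η t ht hr
  have h1 := conf_seg1 ξ η ht
  have h2 := conf_seg2 ξ η ht
  simp only
  linarith

lemma bound_alg {x y θ c : ℝ} (hx : 0 ≤ x) (hxy : x ≤ y) (h1 : x * y + θ * (y - x) ≤ c)
    (h2 : θ ^ 2 ≤ c) : -(x * y) + θ * (y + x) ≤ c := by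
  rcases le_total θ y with h | h
  · nlinarith
  · nlinarith [mul_nonneg (show 0 ≤ θ - x by linarith) (show 0 ≤ θ - y by linarith)]

lemma rc_bound {K : Set (ℝ × ℝ)} {E : Set M2}
    (hE : E = {ξ | (lam1 ξ, lam2 ξ) ∈ K}) {P : ℝ × ℝ} (hPm : ∀ q ∈ K, q.2 ≤ P.2) {ξ : M2} (h : ξ ∈ rcHull E) :
    ‖(conf ξ).1‖ + ‖(conf ξ).2‖ ≤ P.2 := by
  have := h _ (roc3 P.2) fun η hη => by
    rw [hE, mem_E_iff] at hη
    have := hPm _ hη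
    simp only at this ⊢
    linarith
  linarith

lemma rc_lam {K : Set (ℝ × ℝ)} (hK : K ⊆ {p : ℝ × ℝ | 0 < p.1 ∧ p.1 ≤ p.2}) {E : Set M2}
    (hE : E = {ξ | (lam1 ξ, lam2 ξ) ∈ K}) (hKc : IsCompact K) {P : ℝ × ℝ} (hP : P ∈ K) (hPm : ∀ q ∈ K, q.2 ≤ P.2) {ξ : M2}
    (h : ξ ∈ rcHull E) (hlt : ‖(conf ξ).1‖ + ‖(conf ξ).2‖ < P.2) : LamHull DC (FC K) (conf ξ) := by
  refine lam_of_Q (a := (conf ξ).1) (b := (conf ξ).2) (Q_of_sep hKc hK hP hPm (abs_nonneg _) (abs_le_sum _ _) hlt ?_)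
  intro θ hθ p hp hmax
  set c := fth θ p with hc
  have hθc : θ ^ 2 ≤ c := by
    refine le_trans ?_ (hmax P hP)
    rw [fth_eq]
    have := (hK hP).1
    have : 0 ≤ (P.1 + θ) * (P.2 - θ) := mul_nonneg (by linarith [hθ.1]) (by linarith [hθ.2])
    linarith
  have key : ∀ α β : ℝ, 0 ≤ α → 0 ≤ β → (|α - β|, α + β) ∈ K →
      α ^ 2 - β ^ 2 + 2 * θ * β ≤ c ∧ -(α ^ 2 - β ^ 2) + 2 * θ * α ≤ c := by
    intro α β hα hβ hm
    have h1 := hmax _ hm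
    have h2 := (hK hm).2
    simp only [fth] at h1 h2
    have h3 := bound_alg (abs_nonneg _) h2 h1 hθc
    rcases le_total β α with hab | hab
    · rw [abs_of_nonneg (by linarith)] at h1 h3
      constructor <;> nlinarith
    · rw [abs_of_nonpos (by linarith)] at h1 h3
      constructor <;> nlinarith
  have f1 := h _ (roc1 hθ.1 c) fun η hη => by
    rw [hE, mem_E_iff] at hη
    have := (key _ _ (norm_nonneg _) (norm_nonneg _) hη).1
    simp only [conf_det]
    linarith
  have f2 := h _ (roc2 hθ.1 c) fun η hη => by
    rw [hE, mem_E_iff] at hη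
    have := (key _ _ (norm_nonneg _) (norm_nonneg _) hη).2
    simp only [conf_det]
    linarith
  simp only [conf_det] at f1 f2
  simp only [fth]
  rcases le_total ‖(conf ξ).2‖ ‖(conf ξ).1‖ with hab | hab
  · rw [abs_of_nonneg (by linarith)]
    nlinarith
  · rw [abs_of_nonpos (by linarith)]
    nlinarith

/-- scaled lamination property of the interior of the rank one convex hull -/
lemma int_rc_lam {K : Set (ℝ × ℝ)} (hK : K ⊆ {p : ℝ × ℝ | 0 < p.1 ∧ p.1 ≤ p.2}) {E : Set M2}
    (hE : E = {ξ | (lam1 ξ, lam2 ξ) ∈ K}) (hKc : IsCompact K) {P : ℝ × ℝ} (hP : P ∈ K) (hPm : ∀ q ∈ K, q.2 ≤ P.2) {ξ : M2}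
    (h : ξ ∈ interior (rcHull E)) :
    ∀ᶠ s in 𝓝[<] (1:ℝ), LamHull DM ((fun η : M2 => s • η) '' E) ξ := by
  have hc : ContinuousAt (fun s : ℝ => s⁻¹ • ξ) 1 := by
    have : ContinuousAt (fun s : ℝ => s⁻¹) 1 := continuousAt_inv₀ one_ne_zero
    exact this.smul continuousAt_const
  have hU : ∀ᶠ s in 𝓝 (1:ℝ), s⁻¹ • ξ ∈ interior (rcHull E) :=
    hc (isOpen_interior.mem_nhds (by simpa using h))
  obtain ⟨t, ht⟩ : ∃ t : ℝ, 1 < t ∧ t • ξ ∈ rcHull E := by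
    have hc : ContinuousAt (fun s : ℝ => s • ξ) 1 := by fun_prop
    have hU : ∀ᶠ s in 𝓝[>] (1:ℝ), s • ξ ∈ interior (rcHull E) :=
      mem_nhdsWithin_of_mem_nhds (hc (isOpen_interior.mem_nhds (by simpa using h)))
    obtain ⟨t, h1, h2⟩ := (hU.and self_mem_nhdsWithin).exists
    exact ⟨t, h2, interior_subset h1⟩
  have hb := rc_bound hE hPm ht.2
  rw [map_smul, Prod.smul_fst, Prod.smul_snd, norm_smul, norm_smul, ← mul_add,
    Real.norm_of_nonneg (by linarith)] at hb
  have hP2 : 0 < P.2 := (hK hP).1.trans_le (hK hP).2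
  have hlt : ‖(conf ξ).1‖ + ‖(conf ξ).2‖ < P.2 := by
    by_contra! hcon
    nlinarith [ht.1]
  have hs : ∀ᶠ s in 𝓝 (1:ℝ), ‖(conf ξ).1‖ + ‖(conf ξ).2‖ < s * P.2 :=
    (continuous_id.mul continuous_const).continuousAt.eventually (lt_mem_nhds (by simpa using hlt))
  filter_upwards [mem_nhdsWithin_of_mem_nhds hU, mem_nhdsWithin_of_mem_nhds hs,
    mem_nhdsWithin_of_mem_nhds (lt_mem_nhds one_pos)] with s h1 h2 h3
  have h3 : 0 < s := h3
  have h4 := rc_lam hK hE hKc hP hPm (interior_subset h1) (by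
    rw [map_smul, Prod.smul_fst, Prod.smul_snd, norm_smul, norm_smul, ← mul_add,
      Real.norm_of_nonneg (by positivity), inv_mul_lt_iff₀ h3]
    exact h2)
  have h5 := h4.map (f := s • conf.symm.toLinearMap) (D' := DM)
    (S' := (fun η : M2 => s • η) '' E) ?_ ?_
  · simpa [h3.ne'] using h5
  · intro d hd
    rw [conf_DM]
    simp only [LinearMap.smul_apply, map_smul]
    simp only [DC, mem_setOf_eq] at hd ⊢
    simp [hd]
  · intro d hd
    refine ⟨conf.symm d, ?_, rfl⟩
    rw [hE, mem_E_iff]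
    simpa using hd

lemma scale_int_rc {K : Set (ℝ × ℝ)} (hK : K ⊆ {p : ℝ × ℝ | 0 < p.1 ∧ p.1 ≤ p.2}) {E : Set M2}
    (hE : E = {ξ | (lam1 ξ, lam2 ξ) ∈ K}) {s : ℝ} (h0 : 0 < s) (h1 : s < 1) {ξ : M2} (h : ξ ∈ E) :
    s • ξ ∈ interior (rcHull E) := by
  rw [hE, mem_E_iff] at h
  have h2 := scale_interior hK h h0 h1
  have hcont : Continuous conf := LinearMap.continuous_of_finiteDimensional conf.toLinearMap
  have h3 : s • ξ ∈ conf ⁻¹' (interior {q | LamHull DC (FC K) q}) := by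
    simpa using h2
  refine interior_maximal ?_ (isOpen_interior.preimage hcont) h3
  intro η hη
  have h4 : LamHull DC (FC K) (conf η) := interior_subset hη
  have h5 := h4.map (f := conf.symm.toLinearMap) (D' := DM) (S' := E) ?_ ?_
  · exact lam_sub_rc (by simpa using h5)
  · intro d hd
    rw [conf_DM]; simpa using hd
  · intro d hd
    rw [hE, mem_E_iff]; simpa using hd

end CI

namespace CI
open Set Filter Topology MeasureTheory

/-- matrices as continuous linear maps -/
noncomputable def psi : M2 ≃L[ℝ] L2 :=
  (Matrix.toLin'.trans LinearMap.toContinuousLinearMap).toContinuousLinearEquiv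

lemma grad_eq (u : R2 → R2) (x : R2) : gradMatrix u x = psi.symm (fderiv ℝ u x) := rfl

lemma psi_apply (ξ : M2) (x : R2) : psi ξ x = Matrix.mulVec ξ x := rfl

lemma psi_symm_apply (L : L2) (i j : Fin 2) : psi.symm L i j = L (Pi.single j 1) i := by
  obtain ⟨ξ, rfl⟩ := psi.surjective L
  rw [psi_apply]; simp

lemma dm_psi {ξ : M2} (h : ξ ∈ DM) : psi ξ ∈ RankOneDir := by
  obtain ⟨w, v, hv, rfl⟩ := det_zero_form h
  refine ⟨LinearMap.toContinuousLinearMap (LinearMap.mk₂ ℝ (fun v x : R2 => v ⬝ᵥ x)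
    (fun a b c => by simp [add_dotProduct]) (fun a b c => by simp)
    (fun a b c => by simp [dotProduct_add]) (fun a b c => by simp) v), w, ?_, ?_⟩
  · intro h0
    have h1 := congrArg (fun L : R2 →L[ℝ] ℝ => L v) h0
    simp only [LinearMap.coe_toContinuousLinearMap', LinearMap.mk₂_apply,
      ContinuousLinearMap.zero_apply, dotProduct_self_eq_zero] at h1
    exact hv h1
  · ext x i
    rw [psi_apply]
    simp [Matrix.vecMulVec_mulVec, mul_comm]

lemma psi_dm {L : L2} (h : L ∈ RankOneDir) : psi.symm L ∈ DM := by
  obtain ⟨n, a, -, rfl⟩ := h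
  simp only [DM, mem_setOf_eq, Matrix.det_fin_two, psi_symm_apply]
  simp; ring

theorem iteration_E {K : Set (ℝ × ℝ)} (hKc : IsCompact K)
    (hK : K ⊆ {p : ℝ × ℝ | 0 < p.1 ∧ p.1 ≤ p.2})
    {E : Set M2} (hE : E = {ξ | (lam1 ξ, lam2 ξ) ∈ K})
    {φ : R2 → R2} {O : Set R2}
    (hO : IsOpen O) (hOb : Bornology.IsBounded O) {Cφ : NNReal} (hφ : LipschitzWith Cφ φ)
    (hφO : ∀ x ∈ O, ContDiffAt ℝ 1 φ x ∧ gradMatrix φ x ∈ interior (rcHull E)) :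
    ∃ (u : R2 → R2) (M : NNReal), LipschitzWith M u ∧
      (∀ x, ‖u x - φ x‖ ≤ Metric.infDist x Oᶜ ^ 2) ∧ ∀ᵐ x, x ∈ O → gradMatrix u x ∈ E := by
  rcases K.eq_empty_or_nonempty with hKe | hKne
  · -- degenerate case
    have hEe : E = ∅ := by rw [hE, hKe]; simp
    have hOe : O = ∅ := by
      rw [eq_empty_iff_forall_notMem]
      intro x hx
      have h := interior_subset (hφO x hx).2 (fun _ => 1) (fun ξ η t ht _ => by simp)
        (by simp [hEe])
      norm_num at h
    exact ⟨φ, Cφ, hφ, fun x => by simp; positivity, by simp [hOe]⟩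
  obtain ⟨P, hP, hPm⟩ := hKc.exists_isMaxOn hKne continuous_snd.continuousOn
  have hPm : ∀ q ∈ K, q.2 ≤ P.2 := fun q hq => hPm hq
  have hconf : Continuous conf := LinearMap.continuous_of_finiteDimensional conf.toLinearMap
  let T : (ℂ × ℂ) →L[ℝ] L2 :=
    LinearMap.toContinuousLinearMap (psi.toLinearEquiv.toLinearMap ∘ₗ conf.symm.toLinearMap)
  have hT : ∀ ξ : M2, T (conf ξ) = psi ξ := fun ξ => by simp [T]
  have hbd : ∀ ξ ∈ rcHull E, ‖psi ξ‖ ≤ ‖T‖ * P.2 := by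
    intro ξ hξ
    rw [← hT]
    refine (T.le_opNorm _).trans ?_
    gcongr
    have := rc_bound hE hPm hξ
    rw [Prod.norm_def]
    exact max_le (by linarith [norm_nonneg (conf ξ).2]) (by linarith [norm_nonneg (conf ξ).1])
  have hErc : E ⊆ rcHull E := fun ξ hξ => lam_sub_rc (LamHull.base hξ)
  have hEcl : IsClosed E := by
    have : E = conf ⁻¹' (FC K) := by
      ext ξ; rw [hE]; exact mem_E_iff K ξ
    rw [this]
    refine IsClosed.preimage hconf ?_
    have hc : Continuous fun p : ℂ × ℂ => (|‖p.1‖ - ‖p.2‖|, ‖p.1‖ + ‖p.2‖) := by fun_prop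
    exact hKc.isClosed.preimage hc
  have h := iteration (O := O) (φ := φ) (U := psi.symm ⁻¹' interior (rcHull E))
    (E := psi.symm ⁻¹' E) (M1 := ‖T‖ * P.2) (Cφ := Cφ)
    (isOpen_interior.preimage psi.symm.continuous) ?_ ?_ (hEcl.preimage psi.symm.continuous) ?_
    hO hOb hφ (Eventually.of_forall fun x hx => by
      have := hφO x hx
      rw [grad_eq] at this
      exact this)
  · exact h
  · intro L hL
    simpa using hbd _ (interior_subset hL)
  · rintro B hB C hC hd _ ⟨s, t, hs, ht, hst, rfl⟩
    have hd' := psi_dm hd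
    rw [map_sub] at hd'
    have := interior_rc_seg hB hC hd' hs (by linarith)
    rw [← hst, add_sub_cancel_left] at this
    simpa using this
  · intro ε hε ξ hξ
    have hev := int_rc_lam hK hE hKc hP hPm hξ
    have hev2 : ∀ᶠ s in 𝓝[<] (1:ℝ), (1 - s) * (‖T‖ * P.2) < ε := by
      have : Continuous fun s : ℝ => (1 - s) * (‖T‖ * P.2) := by fun_prop
      exact mem_nhdsWithin_of_mem_nhds (this.continuousAt (gt_mem_nhds (by simpa using hε)))
    have hev3 : ∀ᶠ s in 𝓝[<] (1:ℝ), 0 < s := mem_nhdsWithin_of_mem_nhds (lt_mem_nhds one_pos)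
    obtain ⟨s, h1, h2, h3, h4⟩ := (hev.and (hev2.and (hev3.and self_mem_nhdsWithin))).exists
    have h4 : s < 1 := h4
    have h5 := h1.map (f := psi.toLinearEquiv.toLinearMap) (D' := RankOneDir)
      (S' := psi.symm ⁻¹' interior (rcHull E) ∩ Metric.thickening ε (psi.symm ⁻¹' E)) ?_ ?_
    · simpa using h5
    · intro d hd; exact dm_psi hd
    · rintro _ ⟨η, hη, rfl⟩
      constructor
      · simpa using scale_int_rc hK hE h3 h4 hη
      · rw [Metric.mem_thickening_iff]
        refine ⟨psi η, by simpa using hη, ?_⟩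
        rw [dist_comm, dist_eq_norm]
        have e : psi η - psi.toLinearEquiv.toLinearMap (s • η) = (1 - s) • psi η := by
          have e0 : psi.toLinearEquiv.toLinearMap (s • η) = s • psi η := map_smul psi s η
          rw [e0]; module
        rw [e, norm_smul, Real.norm_of_nonneg (by linarith)]
        refine lt_of_le_of_lt ?_ h2
        have := hbd η (hErc hη)
        exact mul_le_mul_of_nonneg_left this (by linarith)

end CI

theorem existence_isotropic_differential_inclusion
    (Ω : Set (Fin 2 → ℝ)) (hΩo : IsOpen Ω) (hΩb : Bornology.IsBounded Ω)
    (K : Set (ℝ × ℝ)) (hKc : IsCompact K)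
    (hKsub : K ⊆ {p : ℝ × ℝ | 0 < p.1 ∧ p.1 ≤ p.2})
    (E : Set (Matrix (Fin 2) (Fin 2) ℝ))
    (hE : E = {ξ | (lam1 ξ, lam2 ξ) ∈ K})
    (φ : (Fin 2 → ℝ) → (Fin 2 → ℝ))
    (hφlip : ∃ C : NNReal, LipschitzOnWith C φ (closure Ω))
    (hφpiec : ∃ ω : ℕ → Set (Fin 2 → ℝ),
      (∀ i, IsOpen (ω i) ∧ ω i ⊆ Ω ∧ ContDiffOn ℝ 1 φ (closure (ω i))) ∧
      MeasureTheory.volume (Ω \ ⋃ i, ω i) = 0)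
    (hDφ : ∀ᵐ x ∂MeasureTheory.volume, x ∈ Ω →
      DifferentiableAt ℝ φ x ∧ gradMatrix φ x ∈ E ∪ interior (rcHull E)) :
    ∃ u : (Fin 2 → ℝ) → (Fin 2 → ℝ),
      (∃ C : NNReal, LipschitzOnWith C u (closure Ω)) ∧
      (∀ x ∈ frontier Ω, u x = φ x) ∧
      (∀ᵐ x ∂MeasureTheory.volume, x ∈ Ω →
        DifferentiableAt ℝ u x ∧ gradMatrix u x ∈ E) := by
  open Set Filter Topology MeasureTheory CI in
  obtain ⟨C, hC⟩ := hφlip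
  obtain ⟨ω, hω, hω0⟩ := hφpiec
  obtain ⟨g, hg, hgφ⟩ := hC.extend_pi
  have hgerm : ∀ x ∈ Ω, g =ᶠ[𝓝 x] φ := fun x hx => by
    filter_upwards [hΩo.mem_nhds hx] with y hy using (hgφ (subset_closure hy)).symm
  let U : Set CI.L2 := CI.psi.symm ⁻¹' interior (rcHull E)
  have hU : IsOpen U := isOpen_interior.preimage CI.psi.symm.continuous
  let O : Set (Fin 2 → ℝ) := {x | x ∈ Ω ∧ ContDiffAt ℝ 1 g x ∧ fderiv ℝ g x ∈ U}
  have hOΩ : O ⊆ Ω := fun x hx => hx.1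
  have hO : IsOpen O := by
    rw [isOpen_iff_mem_nhds]
    rintro x ⟨h1, h2, h3⟩
    have e1 : ∀ᶠ y in 𝓝 x, ContDiffAt ℝ 1 g y := h2.eventually (by simp)
    have e2 : ∀ᶠ y in 𝓝 x, fderiv ℝ g y ∈ U :=
      (h2.continuousAt_fderiv (by simp)) (hU.mem_nhds h3)
    filter_upwards [hΩo.mem_nhds h1, e1, e2] with y a b c using ⟨a, b, c⟩
  have hOb := hΩb.subset hOΩ
  obtain ⟨u, M, hu, huφ, huE⟩ := CI.iteration_E hKc hKsub hE hO hOb hg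
    (fun x hx => ⟨hx.2.1, hx.2.2⟩)
  refine ⟨u, ⟨M, hu.lipschitzOnWith⟩, ?_, ?_⟩
  · intro x hx
    have hxO : x ∉ O := fun h => by
      rw [hΩo.frontier_eq] at hx
      exact hx.2 (hOΩ h)
    have h0 := huφ x
    rw [Metric.infDist_zero_of_mem (show x ∈ Oᶜ from hxO)] at h0
    have : u x = g x := by
      rw [← sub_eq_zero, ← norm_le_zero_iff]; simpa using h0
    rw [this]
    exact (hgφ hx.1).symm
  · have hω' : ∀ᵐ x, ¬ (x ∈ Ω \ ⋃ i, ω i) := measure_eq_zero_iff_ae_notMem.1 hω0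
    filter_upwards [hω', huE, hDφ, hu.ae_differentiableAt] with x h1 h2 h3 h4 hxΩ
    refine ⟨h4, ?_⟩
    by_cases hxO : x ∈ O
    · exact h2 hxO
    have hxω : x ∈ ⋃ i, ω i := by
      by_contra hcon
      exact h1 ⟨hxΩ, hcon⟩
    obtain ⟨i, hi⟩ := mem_iUnion.1 hxω
    have hcd : ContDiffAt ℝ 1 φ x :=
      (hω i).2.2.contDiffAt (mem_of_superset ((hω i).1.mem_nhds hi) subset_closure)
    have hcg : ContDiffAt ℝ 1 g x := hcd.congr_of_eventuallyEq (hgerm x hxΩ)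
    obtain ⟨h5, h6⟩ := h3 hxΩ
    have hfe : fderiv ℝ g x = fderiv ℝ φ x := (hgerm x hxΩ).fderiv_eq
    have hφE : gradMatrix φ x ∈ E := by
      refine h6.resolve_right fun h => hxO ⟨hxΩ, hcg, ?_⟩
      rw [hfe]; exact h
    have hz : HasFDerivAt (fun y => u y - g y) (0 : CI.L2) x := by
      refine HasFDerivAt.of_isLittleO ?_
      have hx0 : u x - g x = 0 := by
        have h0 := huφ x
        rw [Metric.infDist_zero_of_mem (show x ∈ Oᶜ from hxO)] at h0
        rw [← norm_le_zero_iff]; simpa using h0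
      have hbig : (fun y => u y - g y - (u x - g x) - (0 : CI.L2) (y - x)) =O[𝓝 x]
          fun y => ‖y - x‖ ^ 2 := by
        refine Asymptotics.IsBigO.of_bound 1 (Eventually.of_forall fun y => ?_)
        rw [hx0]
        simp only [sub_zero, ContinuousLinearMap.zero_apply, norm_pow, norm_norm, one_mul]
        refine (huφ y).trans ?_
        have : Metric.infDist y Oᶜ ≤ ‖y - x‖ := by
          rw [← dist_eq_norm]
          exact Metric.infDist_le_dist_of_mem hxO
        have h0 : 0 ≤ Metric.infDist y Oᶜ := Metric.infDist_nonneg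
        gcongr
      refine hbig.trans_isLittleO ?_
      exact Asymptotics.isLittleO_pow_sub_sub x (by norm_num)
    have hug : HasFDerivAt u (fderiv ℝ g x) x := by
      have := hz.add (hcg.differentiableAt (by simp)).hasFDerivAt
      rw [zero_add] at this
      exact this.congr_of_eventuallyEq (Eventually.of_forall fun y => by simp)
    have : gradMatrix u x = gradMatrix φ x := by
      unfold gradMatrix
      rw [hug.fderiv, hfe]
    rw [this]; exact hφE
end

section
/- Let K ⊂ {(x,y) ∈ ℝ² : 0 < x ≤ y} be a compact set and let E := {ξ ∈ ℝ^{2×2} : (λ₁(ξ), λ₂(ξ)) ∈ K}. Then E^{rc} = E^{pc} = Pco E. -/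
open scoped BigOperators

/-- Lamination-closedness in conformal coordinates. -/
def LamT (T : ℂ → ℂ → Prop) : Prop :=
  ∀ (z₁ w₁ z₂ w₂ : ℂ) (t : ℝ), 0 ≤ t → t ≤ 1 → ‖z₁ - z₂‖ = ‖w₁ - w₂‖ → T z₁ w₁ → T z₂ w₂ →
    T ((t : ℂ) * z₁ + (1 - t : ℂ) * z₂) ((t : ℂ) * w₁ + (1 - t : ℂ) * w₂)

/-- All pairs with moduli `{r, s}` satisfy `T`. -/
def FullR (T : ℂ → ℂ → Prop) (r s : ℝ) : Prop :=
  ∀ z w : ℂ, (‖z‖ = r ∧ ‖w‖ = s) ∨ (‖z‖ = s ∧ ‖w‖ = r) → T z w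

theorem LamT.swap {T : ℂ → ℂ → Prop} (h : LamT T) : LamT (fun z w => T w z) := by
  intro z₁ w₁ z₂ w₂ t h0 h1 hn a b
  exact h w₁ z₁ w₂ z₂ t h0 h1 hn.symm a b

theorem FullR.swap {T : ℂ → ℂ → Prop} {r s : ℝ} (h : FullR T r s) :
    FullR (fun z w => T w z) r s := by
  intro z w hzw
  apply h w z
  tauto

theorem polar_ex (z : ℂ) : ∃ u : ℂ, ‖u‖ = 1 ∧ z = (‖z‖ : ℂ) * u := by
  by_cases hz : z = 0
  · exact ⟨1, by simp, by simp [hz]⟩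
  · refine ⟨z / (‖z‖ : ℂ), ?_, ?_⟩
    · simp [hz]
    · have : (‖z‖ : ℂ) ≠ 0 := by simpa using hz
      field_simp

theorem norm_real_mul_unit {u : ℂ} (hu : ‖u‖ = 1) {r : ℝ} (hr : 0 ≤ r) : ‖(r : ℂ) * u‖ = r := by
  rw [norm_mul, hu, mul_one, Complex.norm_real, Real.norm_of_nonneg hr]

theorem stepA {T : ℂ → ℂ → Prop} (hT : LamT T) {r₀ s₀ : ℝ} (hs : 0 ≤ s₀) (hrs : s₀ ≤ r₀)
    (hF : FullR T r₀ s₀) {z w : ℂ} (h1 : ‖z‖ + ‖w‖ = r₀ + s₀) (h2 : s₀ ≤ ‖z‖) (h3 : ‖z‖ ≤ r₀) :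
    T z w := by
  rcases hrs.eq_or_lt with h | h
  · apply hF
    left
    constructor <;> linarith
  · obtain ⟨u, hu, hz⟩ := polar_ex z
    obtain ⟨v, hv, hw⟩ := polar_ex w
    have hd : 0 < r₀ - s₀ := by linarith
    have key := hT ((r₀ : ℂ) * u) ((s₀ : ℂ) * v) ((s₀ : ℂ) * u) ((r₀ : ℂ) * v)
      ((‖z‖ - s₀) / (r₀ - s₀)) (div_nonneg (by linarith) hd.le)
      ((div_le_one hd).2 (by linarith))
      (by
        rw [← sub_mul, ← sub_mul, norm_mul, norm_mul, hu, hv, norm_sub_rev])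
      (hF _ _ (Or.inl ⟨norm_real_mul_unit hu (by linarith), norm_real_mul_unit hv hs⟩))
      (hF _ _ (Or.inr ⟨norm_real_mul_unit hu hs, norm_real_mul_unit hv (by linarith)⟩))
    have hdc : (r₀ : ℂ) - s₀ ≠ 0 := by
      exact_mod_cast hd.ne'
    have hwn : (‖w‖ : ℂ) = r₀ + s₀ - ‖z‖ := by
      have : ‖w‖ = r₀ + s₀ - ‖z‖ := by linarith
      rw [this]; push_cast; ring
    convert key using 1
    · conv_lhs => rw [hz]
      push_cast
      field_simp
      ring
    · conv_lhs => rw [hw, hwn]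
      push_cast
      field_simp
      ring

theorem norm_perp {u : ℂ} (hu : ‖u‖ = 1) {r τ ρ : ℝ} (hρ : 0 ≤ ρ) (h : r ^ 2 + τ ^ 2 = ρ ^ 2) :
    ‖((r : ℂ) + τ * Complex.I) * u‖ = ρ := by
  rw [norm_mul, hu, mul_one, Complex.norm_add_mul_I, h, Real.sqrt_sq hρ]

theorem stepB {T : ℂ → ℂ → Prop} (hT : LamT T) {r₀ s₀ : ℝ} (hs : 0 ≤ s₀) (hrs : s₀ < r₀)
    (hF : FullR T r₀ s₀) {z w : ℂ} (h1 : ‖z‖ + ‖w‖ ≤ r₀ + s₀)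
    (h2 : ‖z‖ ^ 2 - ‖w‖ ^ 2 ≤ r₀ ^ 2 - s₀ ^ 2) (h3 : ‖w‖ ^ 2 - ‖z‖ ^ 2 ≤ r₀ ^ 2 - s₀ ^ 2) :
    T z w := by
  obtain ⟨u, hu, hz⟩ := polar_ex z
  obtain ⟨v, hv, hw⟩ := polar_ex w
  have hr0 := norm_nonneg z
  have hs0 := norm_nonneg w
  set r := ‖z‖
  set s := ‖w‖
  set b := r₀ + s₀ with hb
  have hbp : 0 < b := by linarith
  obtain ⟨e, he⟩ : ∃ e, e * b = r ^ 2 - s ^ 2 := ⟨(r ^ 2 - s ^ 2) / b, by field_simp⟩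
  have he1 : e ≤ r₀ - s₀ := by
    by_contra hc
    push Not at hc
    nlinarith
  have he2 : -e ≤ r₀ - s₀ := by
    by_contra hc
    push Not at hc
    nlinarith
  set r' := (b + e) / 2 with hr'
  set s' := (b - e) / 2 with hs'
  have hr'0 : 0 ≤ r' := by rw [hr']; linarith
  have hs'0 : 0 ≤ s' := by rw [hs']; linarith
  have hrr : r ≤ r' := by
    have : (b - (r + s)) * (b - (r - s)) = b * (b + e - 2 * r) := by linear_combination (-1 : ℝ) * he
    have h0 : 0 ≤ (b - (r + s)) * (b - (r - s)) := mul_nonneg (by linarith) (by linarith)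
    rw [this] at h0
    have := nonneg_of_mul_nonneg_right h0 hbp
    rw [hr']; linarith
  have hdet : r' ^ 2 - s' ^ 2 = r ^ 2 - s ^ 2 := by
    rw [hr', hs', ← he]; ring
  set τ := Real.sqrt (r' ^ 2 - r ^ 2)
  have hτ : τ ^ 2 = r' ^ 2 - r ^ 2 := Real.sq_sqrt (by nlinarith)
  have n1 : ‖((r : ℂ) + (τ : ℝ) * Complex.I) * u‖ = r' := norm_perp hu hr'0 (by linarith)
  have n2 : ‖((r : ℂ) + ((-τ : ℝ) : ℂ) * Complex.I) * u‖ = r' :=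
    norm_perp hu hr'0 (by rw [neg_sq]; linarith)
  have n3 : ‖((s : ℂ) + (τ : ℝ) * Complex.I) * v‖ = s' := norm_perp hv hs'0 (by linarith)
  have n4 : ‖((s : ℂ) + ((-τ : ℝ) : ℂ) * Complex.I) * v‖ = s' :=
    norm_perp hv hs'0 (by rw [neg_sq]; linarith)
  have t1 := stepA hT hs hrs.le hF (z := ((r : ℂ) + (τ : ℝ) * Complex.I) * u)
    (w := ((s : ℂ) + (τ : ℝ) * Complex.I) * v) (by rw [n1, n3, hr', hs']; ring)
    (by rw [n1, hr']; linarith) (by rw [n1, hr']; linarith)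
  have t2 := stepA hT hs hrs.le hF (z := ((r : ℂ) + ((-τ : ℝ) : ℂ) * Complex.I) * u)
    (w := ((s : ℂ) + ((-τ : ℝ) : ℂ) * Complex.I) * v) (by rw [n2, n4, hr', hs']; ring)
    (by rw [n2, hr']; linarith) (by rw [n2, hr']; linarith)
  have key := hT _ _ _ _ (1 / 2) (by norm_num) (by norm_num) (by
    rw [← sub_mul, ← sub_mul, norm_mul, norm_mul, hu, hv]
    congr 2
    ring) t1 t2
  convert key using 1
  · conv_lhs => rw [hz]
    push_cast
    ring
  · conv_lhs => rw [hw]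
    push_cast
    ring

theorem triangle_ex {r₁ r₂ ρ : ℝ} (h1 : 0 < r₁) (h2 : 0 < r₂) (ha : (r₁ - r₂) ^ 2 ≤ ρ ^ 2)
    (hb : ρ ^ 2 ≤ (r₁ + r₂) ^ 2) :
    ∃ z₁ z₂ : ℂ, ‖z₁‖ = r₁ ∧ ‖z₂‖ = r₂ ∧ ‖z₁ - z₂‖ = |ρ| ∧
      ∀ t : ℝ, ‖(t : ℂ) * z₁ + (1 - t : ℂ) * z₂‖ ^ 2 =
        t * r₁ ^ 2 + (1 - t) * r₂ ^ 2 - t * (1 - t) * ρ ^ 2 := by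
  obtain ⟨c, hc⟩ : ∃ c, 2 * r₁ * r₂ * c = r₁ ^ 2 + r₂ ^ 2 - ρ ^ 2 :=
    ⟨(r₁ ^ 2 + r₂ ^ 2 - ρ ^ 2) / (2 * r₁ * r₂), by field_simp⟩
  have hp : 0 < r₁ * r₂ := mul_pos h1 h2
  have c1 : c ≤ 1 := by
    by_contra h
    push Not at h
    nlinarith
  have c2 : -1 ≤ c := by
    by_contra h
    push Not at h
    nlinarith
  have hsq : Real.sqrt (1 - c ^ 2) ^ 2 = 1 - c ^ 2 := Real.sq_sqrt (by nlinarith)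
  set σ := Real.sqrt (1 - c ^ 2)
  refine ⟨(r₁ : ℂ), ⟨r₂ * c, r₂ * σ⟩, ?_, ?_, ?_, ?_⟩
  · rw [Complex.norm_real, Real.norm_of_nonneg h1.le]
  · rw [← sq_eq_sq₀ (norm_nonneg _) h2.le, Complex.sq_norm, Complex.normSq_mk]
    linear_combination r₂ ^ 2 * hsq
  · rw [← sq_eq_sq₀ (norm_nonneg _) (abs_nonneg _), sq_abs, Complex.sq_norm, Complex.normSq_apply]
    simp only [Complex.sub_re, Complex.sub_im, Complex.ofReal_re, Complex.ofReal_im]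
    linear_combination r₂ ^ 2 * hsq - hc
  · intro t
    rw [Complex.sq_norm, Complex.normSq_apply]
    simp only [Complex.sub_re, Complex.sub_im, Complex.ofReal_re, Complex.ofReal_im,
      Complex.add_re, Complex.add_im, Complex.mul_re, Complex.mul_im, Complex.one_re,
      Complex.one_im]
    linear_combination (1 - t) ^ 2 * r₂ ^ 2 * hsq + t * (1 - t) * hc

theorem rot_ex {z z' : ℂ} (h : ‖z‖ = ‖z'‖) : ∃ u : ℂ, ‖u‖ = 1 ∧ z = u * z' := by
  by_cases hz : z' = 0
  · refine ⟨1, by simp, ?_⟩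
    rw [hz, norm_zero, norm_eq_zero] at h
    simp [h, hz]
  · refine ⟨z / z', ?_, by field_simp⟩
    rw [norm_div, h, div_self]
    simpa using hz

theorem stepC {T : ℂ → ℂ → Prop} (hT : LamT T) {r₁ s₁ r₂ s₂ t : ℝ} (hs1 : 0 ≤ s₁) (hs2 : 0 ≤ s₂)
    (hr1 : 0 < r₁) (hr2 : 0 < r₂) (ha : (r₁ - r₂) ^ 2 ≤ (s₁ - s₂) ^ 2)
    (hb : (s₁ - s₂) ^ 2 ≤ (r₁ + r₂) ^ 2) (hF1 : FullR T r₁ s₁) (hF2 : FullR T r₂ s₂)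
    (ht0 : 0 ≤ t) (ht1 : t ≤ 1) {z w : ℂ} (hw : ‖w‖ = t * s₁ + (1 - t) * s₂)
    (hz : ‖z‖ ^ 2 - ‖w‖ ^ 2 = t * (r₁ ^ 2 - s₁ ^ 2) + (1 - t) * (r₂ ^ 2 - s₂ ^ 2)) : T z w := by
  obtain ⟨z₁, z₂, n1, n2, n3, n4⟩ := triangle_ex hr1 hr2 ha hb
  obtain ⟨u, hu, hzu⟩ : ∃ u : ℂ, ‖u‖ = 1 ∧ z = u * ((t : ℂ) * z₁ + (1 - t : ℂ) * z₂) := by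
    apply rot_ex
    rw [← sq_eq_sq₀ (norm_nonneg _) (norm_nonneg _), n4]
    rw [hw] at hz
    linear_combination hz
  obtain ⟨v, hv, hwv⟩ := polar_ex w
  have key := hT (u * z₁) ((s₁ : ℂ) * v) (u * z₂) ((s₂ : ℂ) * v) t ht0 ht1 (by
      rw [← mul_sub, ← sub_mul, norm_mul, norm_mul, hu, hv, n3, one_mul, mul_one,
        ← Complex.ofReal_sub, Complex.norm_real, Real.norm_eq_abs])
    (hF1 _ _ (Or.inl ⟨by rw [norm_mul, hu, n1, one_mul], norm_real_mul_unit hv hs1⟩))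
    (hF2 _ _ (Or.inl ⟨by rw [norm_mul, hu, n2, one_mul], norm_real_mul_unit hv hs2⟩))
  convert key using 1
  · rw [hzu]; ring
  · conv_lhs => rw [hwv, hw]
    push_cast
    ring

/-- The set of full types in the coordinates `(s, d)`. -/
def LSet (T : ℂ → ℂ → Prop) : Set (ℝ × ℝ) :=
  {p | 0 ≤ p.1 ∧ 0 < p.2 ∧ FullR T (Real.sqrt (p.2 + p.1 ^ 2)) p.1}

theorem sqrt_facts {s d : ℝ} (hs : 0 ≤ s) (hd : 0 < d) :
    s < Real.sqrt (d + s ^ 2) ∧ Real.sqrt (d + s ^ 2) ^ 2 = d + s ^ 2 :=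
  ⟨Real.lt_sqrt_of_sq_lt (by linarith), Real.sq_sqrt (by positivity)⟩

/-- Domination by a single full point, in linear form. -/
theorem dom {T : ℂ → ℂ → Prop} (hT : LamT T) {p : ℝ × ℝ} (hp : p ∈ LSet T) {s d r : ℝ} (hs : 0 ≤ s)
    (hr : 0 ≤ r) (hd0 : 0 ≤ d) (hrs : r ^ 2 - s ^ 2 = d) (hd : d ≤ p.2)
    (hy : d + 2 * (Real.sqrt (p.2 + p.1 ^ 2) + p.1) * s ≤ (Real.sqrt (p.2 + p.1 ^ 2) + p.1) ^ 2) :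
    FullR T r s := by
  obtain ⟨h1, h2, h3⟩ := hp
  obtain ⟨f1, f2⟩ := sqrt_facts h1 h2
  set r₀ := Real.sqrt (p.2 + p.1 ^ 2)
  have hsb : s ≤ r₀ + p.1 := by
    by_contra hc
    push Not at hc
    nlinarith
  have hle : r + s ≤ r₀ + p.1 := by
    have : r ≤ r₀ + p.1 - s := by
      refine le_trans (le_abs_self _) (abs_le_of_sq_le_sq ?_ (by linarith))
      nlinarith
    linarith
  intro z w hzw
  rcases hzw with ⟨a, b⟩ | ⟨a, b⟩
  · exact stepB hT h1 f1 h3 (by rw [a, b]; linarith) (by rw [a, b]; linarith)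
      (by rw [a, b]; linarith)
  · exact stepB hT h1 f1 h3 (by rw [a, b]; linarith) (by rw [a, b]; linarith)
      (by rw [a, b]; linarith)

theorem LSet_convex {T : ℂ → ℂ → Prop} (hT : LamT T) : Convex ℝ (LSet T) := by
  rintro ⟨s₁, d₁⟩ hp₁ ⟨s₂, d₂⟩ hp₂ t t' ht ht' htt
  have e : t' = 1 - t := by linarith
  subst e
  have hp1 := hp₁
  have hp2 := hp₂
  obtain ⟨a1, a2, a3⟩ := hp₁
  obtain ⟨b1, b2, b3⟩ := hp₂
  simp only at a1 a2 a3 b1 b2 b3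
  obtain ⟨f1, f2⟩ := sqrt_facts a1 a2
  obtain ⟨g1, g2⟩ := sqrt_facts b1 b2
  simp only [Prod.smul_mk, Prod.mk_add_mk, smul_eq_mul]
  have hs : 0 ≤ t * s₁ + (1 - t) * s₂ := by positivity
  have hd : 0 < t * d₁ + (1 - t) * d₂ := by
    rcases ht.eq_or_lt with h | h
    · rw [← h]; linarith
    · have := mul_pos h a2
      have := mul_nonneg ht' b2.le
      linarith
  refine ⟨hs, hd, ?_⟩
  simp only
  obtain ⟨k1, k2⟩ := sqrt_facts hs hd
  have hd1 := dom hT hp1 hs (Real.sqrt_nonneg _) hd.le (sub_eq_of_eq_add k2)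
  have hd2 := dom hT hp2 hs (Real.sqrt_nonneg _) hd.le (sub_eq_of_eq_add k2)
  simp only at hd1 hd2
  set r₁ := Real.sqrt (d₁ + s₁ ^ 2)
  set r₂ := Real.sqrt (d₂ + s₂ ^ 2)
  set r := Real.sqrt (t * d₁ + (1 - t) * d₂ + (t * s₁ + (1 - t) * s₂) ^ 2)
  have lin1 : r₁ + s₁ ≤ r₂ + s₂ → d₁ + 2 * (r₂ + s₂) * s₁ ≤ (r₂ + s₂) ^ 2 := by
    intro h
    nlinarith
  have lin2 : r₂ + s₂ ≤ r₁ + s₁ → d₂ + 2 * (r₁ + s₁) * s₂ ≤ (r₁ + s₁) ^ 2 := by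
    intro h
    nlinarith
  have eq1 : d₁ + 2 * (r₁ + s₁) * s₁ = (r₁ + s₁) ^ 2 := by linear_combination -f2
  have eq2 : d₂ + 2 * (r₂ + s₂) * s₂ = (r₂ + s₂) ^ 2 := by linear_combination -g2
  have merge : (r₁ - r₂) ^ 2 ≤ (s₁ - s₂) ^ 2 → FullR T r (t * s₁ + (1 - t) * s₂) := by
    intro hm
    have hm2 : (s₁ - s₂) ^ 2 ≤ (r₁ + r₂) ^ 2 := by
      apply sq_le_sq'
      · linarith
      · linarith
    intro z w hzw
    rcases hzw with ⟨a, b⟩ | ⟨a, b⟩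
    · exact stepC hT a1 b1 (by linarith) (by linarith) hm hm2 a3 b3 ht (by linarith) b
        (by rw [a, b, k2, f2, g2]; ring)
    · exact stepC hT.swap a1 b1 (by linarith) (by linarith) hm hm2 a3.swap b3.swap ht
        (by linarith) a (by rw [a, b, k2, f2, g2]; ring)
  rcases le_total (r₁ + s₁) (r₂ + s₂) with hy | hy
  · rcases le_total d₁ d₂ with hdd | hdd
    · apply hd2
      · nlinarith
      · have := mul_le_mul_of_nonneg_left (lin1 hy) ht
        linear_combination this + (1 - t) * eq2
    · apply merge
      have : r₂ - s₂ ≤ r₁ - s₁ := by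
        by_contra hc
        push Not at hc
        nlinarith
      rw [← sq_abs (s₁ - s₂), ← sq_abs (r₁ - r₂)]
      have h1 : |r₁ - r₂| ≤ |s₁ - s₂| := by
        rw [abs_sub_comm s₁]
        refine le_trans ?_ (le_abs_self _)
        rw [abs_le]
        constructor <;> linarith
      gcongr
  · rcases le_total d₂ d₁ with hdd | hdd
    · apply hd1
      · nlinarith
      · have := mul_le_mul_of_nonneg_left (lin2 hy) ht'
        linear_combination this + t * eq1
    · apply merge
      have : r₁ - s₁ ≤ r₂ - s₂ := by
        by_contra hc
        push Not at hc
        nlinarith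
      have h1 : |r₁ - r₂| ≤ |s₁ - s₂| := by
        refine le_trans ?_ (le_abs_self _)
        rw [abs_le]
        constructor <;> linarith
      rw [← sq_abs (s₁ - s₂), ← sq_abs (r₁ - r₂)]
      gcongr

theorem nonneg_of_ray {c α : ℝ} (h : ∀ n : ℝ, 0 ≤ n → 0 < c + n * α) : 0 ≤ α := by
  by_contra hα
  push Not at hα
  have h0 := h 0 le_rfl
  have := h (c / (-α)) (div_nonneg (by linarith) (by linarith))
  have e : c / (-α) * α = -c := by
    have : α ≠ 0 := hα.ne
    field_simp
  rw [e] at this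
  linarith

theorem isCompact_convexHull_plane {Q : Set (ℝ × ℝ)} (hQ : IsCompact Q) :
    IsCompact (convexHull ℝ Q) := by
  have hEq : convexHull ℝ Q = ⋃ n ∈ Finset.range 4,
      (fun p : (Fin n → ℝ) × (Fin n → ℝ × ℝ) => ∑ i, p.1 i • p.2 i) ''
        (stdSimplex ℝ (Fin n) ×ˢ Set.univ.pi fun _ => Q) := by
    apply Set.Subset.antisymm
    · intro x hx
      obtain ⟨ι, hι, z, w, hz, hai, hw, hw1, hx⟩ := eq_pos_convex_span_of_mem_convexHull hx
      have hcard : Fintype.card ι ≤ 3 := by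
        have h1 := hai.card_le_finrank_succ
        have h2 := Submodule.finrank_le (vectorSpan ℝ (Set.range z))
        have h3 : Module.finrank ℝ (ℝ × ℝ) = 2 := by simp
        omega
      simp only [Set.mem_iUnion]
      let e := Fintype.equivFin ι
      refine ⟨Fintype.card ι, by simpa using Nat.lt_succ_of_le hcard,
        (fun i => w (e.symm i), fun i => z (e.symm i)), ⟨⟨fun i => (hw _).le, ?_⟩, ?_⟩, ?_⟩
      · simpa using (Equiv.sum_comp e.symm w).trans hw1
      · intro i _
        exact hz ⟨_, rfl⟩
      · exact (Equiv.sum_comp e.symm fun i => w i • z i).trans hx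
    · intro x hx
      simp only [Set.mem_iUnion] at hx
      obtain ⟨n, -, ⟨w, z⟩, ⟨hw, hz⟩, rfl⟩ := hx
      exact (convex_convexHull ℝ Q).sum_mem (fun i _ => hw.1 i) hw.2
        (fun i _ => subset_convexHull ℝ Q (hz i (Set.mem_univ i)))
  rw [hEq]
  apply Finset.isCompact_biUnion
  intro n _
  exact ((isCompact_stdSimplex ℝ (Fin n)).prod (isCompact_univ_pi fun _ => hQ)).image (by fun_prop)

theorem cover_hull {Q : Set (ℝ × ℝ)} (hQ : IsCompact Q) {B s d : ℝ} (hB : 0 < B)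
    (hH : ∀ θ : ℝ, 0 ≤ θ → θ ≤ B → ∃ q ∈ Q, d + 2 * θ * s ≤ q.2 + 2 * θ * q.1) :
    ∃ q ∈ convexHull ℝ Q, d ≤ q.2 ∧ d + 2 * B * s ≤ q.2 + 2 * B * q.1 := by
  by_contra hcon
  push Not at hcon
  set C : Set (ℝ × ℝ) := {q | d ≤ q.2} ∩ {q | d + 2 * B * s ≤ q.2 + 2 * B * q.1} with hC
  have hCc : IsClosed C := by
    apply IsClosed.inter
    · exact isClosed_le (by fun_prop) (by fun_prop)
    · exact isClosed_le (by fun_prop) (by fun_prop)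
  have hCv : Convex ℝ C := by
    rintro ⟨x₁, y₁⟩ ⟨h1, h2⟩ ⟨x₂, y₂⟩ ⟨h3, h4⟩ a b ha hb hab
    simp only [Set.mem_ofPred_eq] at h1 h2 h3 h4
    have e : b = 1 - a := by linarith
    subst e
    constructor
    · simp only [Set.mem_ofPred_eq, Prod.smul_mk, Prod.mk_add_mk, smul_eq_mul]
      nlinarith
    · simp only [Set.mem_ofPred_eq, Prod.smul_mk, Prod.mk_add_mk, smul_eq_mul]
      have i1 := mul_le_mul_of_nonneg_left h2 ha
      have i2 := mul_le_mul_of_nonneg_left h4 hb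
      linear_combination i1 + i2
  have hdisj : Disjoint (convexHull ℝ Q) C := by
    rw [Set.disjoint_left]
    rintro q hq ⟨h1, h2⟩
    exact absurd h2 (not_le.2 (hcon q hq h1))
  obtain ⟨f, u, v, hf1, huv, hf2⟩ := geometric_hahn_banach_compact_closed
    (convex_convexHull ℝ Q) (isCompact_convexHull_plane hQ) hCv hCc hdisj
  have hfe : ∀ x y : ℝ, f (x, y) = x * f (1, 0) + y * f (0, 1) := by
    intro x y
    have : ((x, y) : ℝ × ℝ) = x • (1, 0) + y • (0, 1) := by simp
    rw [this, map_add, map_smul, map_smul, smul_eq_mul, smul_eq_mul]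
  set α := f (1, 0)
  set β := f (0, 1)
  have hα : 0 ≤ α := by
    apply nonneg_of_ray (c := f (s, d) - v)
    intro n hn
    have := hf2 (s + n, d) ⟨by simp, by simp; nlinarith⟩
    rw [hfe] at this
    rw [hfe]
    linarith
  have hβ' : 0 ≤ -α + 2 * B * β := by
    apply nonneg_of_ray (c := f (s, d) - v)
    intro n hn
    have := hf2 (s - n, d + n * (2 * B)) ⟨by simp; nlinarith, by simp; nlinarith⟩
    rw [hfe] at this
    rw [hfe]
    linarith
  have hp : v < f (s, d) := hf2 (s, d) ⟨by simp, by simp⟩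
  have hlt : ∀ q ∈ Q, f (q.1, q.2) < f (s, d) := fun q hq =>
    (hf1 q (subset_convexHull ℝ Q hq)).trans (huv.trans hp)
  have hβ0 : 0 ≤ β := by
    by_contra hc
    push Not at hc
    nlinarith
  have hβ : 0 < β := by
    rcases hβ0.eq_or_lt with h | h
    · exfalso
      have h0 : α = 0 := by rw [← h] at hβ'; linarith
      obtain ⟨q, hq, -⟩ := hH 0 le_rfl hB.le
      have := hlt q hq
      rw [hfe, hfe, h0, ← h] at this
      linarith
    · exact h
  obtain ⟨θ, hθ⟩ : ∃ θ, α = 2 * θ * β := ⟨α / (2 * β), by field_simp⟩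
  obtain ⟨q, hq, hle⟩ := hH θ (by
      by_contra hc
      push Not at hc
      nlinarith) (by
      by_contra hc
      push Not at hc
      nlinarith)
  have h1 := hlt q hq
  rw [hfe, hfe, hθ] at h1
  have h2 := mul_le_mul_of_nonneg_left hle hβ.le
  linarith

theorem cover {T : ℂ → ℂ → Prop} (hT : LamT T) {K : Set (ℝ × ℝ)} (hKc : IsCompact K)
    (hKsub : K ⊆ {p : ℝ × ℝ | 0 < p.1 ∧ p.1 ≤ p.2})
    (hKT : ∀ p ∈ K, FullR T ((p.1 + p.2) / 2) ((p.2 - p.1) / 2)) {a B : ℝ} (haB : (a, B) ∈ K)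
    (hmax : ∀ p ∈ K, p.2 ≤ B) {r s : ℝ} (hs : 0 ≤ s) (hsr : s ≤ r)
    (hH : ∀ θ : ℝ, 0 ≤ θ → θ ≤ B → ∃ k ∈ K,
      r ^ 2 - s ^ 2 + 2 * θ * s ≤ k.1 * k.2 + θ * (k.2 - k.1)) : FullR T r s := by
  obtain ⟨ha0, haB'⟩ := hKsub haB
  simp only at ha0 haB'
  have hB : 0 < B := by linarith
  set φ : ℝ × ℝ → ℝ × ℝ := fun p => ((p.2 - p.1) / 2, p.1 * p.2) with hφ
  have hQc : IsCompact (φ '' K) := hKc.image (by fun_prop)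
  have hQL : φ '' K ⊆ LSet T := by
    rintro _ ⟨⟨x, y⟩, hk, rfl⟩
    obtain ⟨h1, h2⟩ := hKsub hk
    simp only at h1 h2
    refine ⟨by simp only [hφ]; linarith, mul_pos h1 (by linarith), ?_⟩
    have : Real.sqrt ((φ (x, y)).2 + (φ (x, y)).1 ^ 2) = (x + y) / 2 := by
      rw [show (φ (x, y)).2 + (φ (x, y)).1 ^ 2 = ((x + y) / 2) ^ 2 by simp only [hφ]; ring]
      exact Real.sqrt_sq (by linarith)
    rw [this]
    exact hKT _ hk
  have hconv : convexHull ℝ (φ '' K) ⊆ LSet T := convexHull_min hQL (LSet_convex hT)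
  obtain ⟨q, hq, hq1, hq2⟩ := cover_hull hQc (B := B) (s := s) (d := r ^ 2 - s ^ 2) hB (by
    intro θ h0 h1
    obtain ⟨k, hk, hle⟩ := hH θ h0 h1
    refine ⟨φ k, ⟨k, hk, rfl⟩, ?_⟩
    simp only [hφ]
    linarith)
  have hd0 : 0 ≤ r ^ 2 - s ^ 2 := by nlinarith
  -- the top point
  have hyB : r ^ 2 - s ^ 2 + 2 * B * s ≤ B ^ 2 := by
    obtain ⟨k, hk, hle⟩ := hH B hB.le le_rfl
    have h1 := hmax k hk
    obtain ⟨h2, h3⟩ := hKsub hk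
    nlinarith [mul_nonneg (sub_nonneg.2 h1) (add_pos hB h2).le]
  have hq0 : φ (a, B) ∈ LSet T := hQL ⟨_, haB, rfl⟩
  rcases le_or_gt (r ^ 2 - s ^ 2) (a * B) with hc | hc
  · apply dom hT hq0 hs (by linarith) hd0 rfl hc
    rw [show Real.sqrt ((φ (a, B)).2 + (φ (a, B)).1 ^ 2) = (a + B) / 2 by
      rw [show (φ (a, B)).2 + (φ (a, B)).1 ^ 2 = ((a + B) / 2) ^ 2 by simp only [hφ]; ring]
      exact Real.sqrt_sq (by linarith)]
    simp only [hφ]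
    rw [show (a + B) / 2 + (B - a) / 2 = B by ring]
    exact hyB
  · have hqa : 0 < q.2 - a * B := by linarith
    set t := (r ^ 2 - s ^ 2 - a * B) / (q.2 - a * B) with ht
    have ht0 : 0 ≤ t := div_nonneg (by linarith) hqa.le
    have ht1 : t ≤ 1 := (div_le_one hqa).2 (by linarith)
    have hte : t * (q.2 - a * B) = r ^ 2 - s ^ 2 - a * B := by rw [ht]; field_simp
    have hmem := LSet_convex hT (hconv hq) hq0 ht0 (sub_nonneg.2 ht1) (by ring)
    set q' := t • q + (1 - t) • φ (a, B) with hq'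
    have e1 : q'.1 = t * q.1 + (1 - t) * ((B - a) / 2) := by simp [hq', hφ]
    have e2 : q'.2 = t * q.2 + (1 - t) * (a * B) := by simp [hq', hφ]
    have e3 : q'.2 = r ^ 2 - s ^ 2 := by rw [e2]; linarith
    have e4 : s ≤ q'.1 := by
      have i1 := mul_le_mul_of_nonneg_left hq2 ht0
      have i2 := mul_le_mul_of_nonneg_left hyB (sub_nonneg.2 ht1)
      have i3 : 2 * B * s ≤ 2 * B * q'.1 := by
        rw [e1]
        linear_combination i1 + i2 + hte
      exact le_of_mul_le_mul_left i3 (by linarith)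
    apply dom hT hmem hs (by linarith) hd0 rfl e3.ge
    obtain ⟨m1, m2, -⟩ := hmem
    obtain ⟨k1, k2⟩ := sqrt_facts m1 m2
    set ρ := Real.sqrt (q'.2 + q'.1 ^ 2)
    have : 2 * (ρ + q'.1) * s ≤ 2 * (ρ + q'.1) * q'.1 :=
      mul_le_mul_of_nonneg_left e4 (by linarith)
    rw [← e3]
    linear_combination this - k2

/-- The matrix with conformal part `z` and anticonformal part `w`. -/
def Mzw (z w : ℂ) : Matrix (Fin 2) (Fin 2) ℝ :=
  !![z.re + w.re, w.im - z.im; z.im + w.im, z.re - w.re]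

/-- Conformal part. -/
noncomputable def zPart (ξ : Matrix (Fin 2) (Fin 2) ℝ) : ℂ :=
  ⟨(ξ 0 0 + ξ 1 1) / 2, (ξ 1 0 - ξ 0 1) / 2⟩

/-- Anticonformal part. -/
noncomputable def wPart (ξ : Matrix (Fin 2) (Fin 2) ℝ) : ℂ :=
  ⟨(ξ 0 0 - ξ 1 1) / 2, (ξ 1 0 + ξ 0 1) / 2⟩

theorem Mzw_parts (ξ : Matrix (Fin 2) (Fin 2) ℝ) : Mzw (zPart ξ) (wPart ξ) = ξ := by
  ext i j
  fin_cases i <;> fin_cases j <;> simp [Mzw, zPart, wPart] <;> ring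

theorem zPart_Mzw (z w : ℂ) : zPart (Mzw z w) = z := by
  apply Complex.ext <;> simp [Mzw, zPart]
  ring

theorem wPart_Mzw (z w : ℂ) : wPart (Mzw z w) = w := by
  apply Complex.ext <;> simp [Mzw, wPart]
  ring

theorem det_parts (ξ : Matrix (Fin 2) (Fin 2) ℝ) : ξ.det = ‖zPart ξ‖ ^ 2 - ‖wPart ξ‖ ^ 2 := by
  rw [Complex.sq_norm, Complex.sq_norm, Matrix.det_fin_two, zPart, wPart, Complex.normSq_mk,
    Complex.normSq_mk]
  ring

theorem frobSq_parts (ξ : Matrix (Fin 2) (Fin 2) ℝ) :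
    frobSq ξ = 2 * ‖zPart ξ‖ ^ 2 + 2 * ‖wPart ξ‖ ^ 2 := by
  rw [Complex.sq_norm, Complex.sq_norm, zPart, wPart, Complex.normSq_mk,
    Complex.normSq_mk, frobSq]
  simp only [Fin.sum_univ_two]
  ring

theorem lam_of_ge (ξ : Matrix (Fin 2) (Fin 2) ℝ) (h : ‖wPart ξ‖ ≤ ‖zPart ξ‖) :
    lam1 ξ = ‖zPart ξ‖ - ‖wPart ξ‖ ∧ lam2 ξ = ‖zPart ξ‖ + ‖wPart ξ‖ := by
  have h1 := norm_nonneg (wPart ξ)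
  have h2 := norm_nonneg (zPart ξ)
  rw [lam1, lam2, frobSq_parts, det_parts]
  set r := ‖zPart ξ‖
  set s := ‖wPart ξ‖
  rw [abs_of_nonneg (by nlinarith : 0 ≤ r ^ 2 - s ^ 2),
    show 2 * r ^ 2 + 2 * s ^ 2 + 2 * (r ^ 2 - s ^ 2) = (2 * r) ^ 2 by ring,
    show 2 * r ^ 2 + 2 * s ^ 2 - 2 * (r ^ 2 - s ^ 2) = (2 * s) ^ 2 by ring,
    Real.sqrt_sq (by linarith), Real.sqrt_sq (by linarith)]
  constructor <;> ring

theorem lam_of_le (ξ : Matrix (Fin 2) (Fin 2) ℝ) (h : ‖zPart ξ‖ ≤ ‖wPart ξ‖) :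
    lam1 ξ = ‖wPart ξ‖ - ‖zPart ξ‖ ∧ lam2 ξ = ‖zPart ξ‖ + ‖wPart ξ‖ := by
  have h1 := norm_nonneg (wPart ξ)
  have h2 := norm_nonneg (zPart ξ)
  rw [lam1, lam2, frobSq_parts, det_parts]
  set r := ‖zPart ξ‖
  set s := ‖wPart ξ‖
  rw [abs_of_nonpos (by nlinarith : r ^ 2 - s ^ 2 ≤ 0),
    show 2 * r ^ 2 + 2 * s ^ 2 + 2 * -(r ^ 2 - s ^ 2) = (2 * s) ^ 2 by ring,
    show 2 * r ^ 2 + 2 * s ^ 2 - 2 * -(r ^ 2 - s ^ 2) = (2 * r) ^ 2 by ring,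
    Real.sqrt_sq (by linarith), Real.sqrt_sq (by linarith)]
  constructor <;> ring

theorem zPart_comb (a b : ℝ) (ξ η : Matrix (Fin 2) (Fin 2) ℝ) :
    zPart (a • ξ + b • η) = a • zPart ξ + b • zPart η := by
  apply Complex.ext <;> simp [zPart] <;> ring

theorem wPart_comb (a b : ℝ) (ξ η : Matrix (Fin 2) (Fin 2) ℝ) :
    wPart (a • ξ + b • η) = a • wPart ξ + b • wPart η := by
  apply Complex.ext <;> simp [wPart] <;> ring

theorem norm_comb {a b : ℝ} (ha : 0 ≤ a) (hb : 0 ≤ b) (u v : ℂ) :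
    ‖a • u + b • v‖ ≤ a * ‖u‖ + b * ‖v‖ := by
  refine (norm_add_le _ _).trans ?_
  rw [norm_smul, norm_smul, Real.norm_of_nonneg ha, Real.norm_of_nonneg hb]

theorem poly1 (θ M : ℝ) (hθ : 0 ≤ θ) :
    PolyconvexFun (fun ξ => ξ.det + 2 * θ * ‖wPart ξ‖ - M) := by
  refine ⟨fun p => p.2 + 2 * θ * ‖wPart p.1‖ - M, ⟨convex_univ, ?_⟩, fun ξ => rfl⟩
  rintro ⟨ξ, d⟩ - ⟨η, e⟩ - a b ha hb hab
  simp only [Prod.smul_mk, Prod.mk_add_mk, smul_eq_mul]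
  rw [wPart_comb]
  have := mul_le_mul_of_nonneg_left (norm_comb ha hb (wPart ξ) (wPart η)) hθ
  linear_combination 2 * this + M * hab

theorem poly2 (θ M : ℝ) (hθ : 0 ≤ θ) :
    PolyconvexFun (fun ξ => -ξ.det + 2 * θ * ‖zPart ξ‖ - M) := by
  refine ⟨fun p => -p.2 + 2 * θ * ‖zPart p.1‖ - M, ⟨convex_univ, ?_⟩, fun ξ => rfl⟩
  rintro ⟨ξ, d⟩ - ⟨η, e⟩ - a b ha hb hab
  simp only [Prod.smul_mk, Prod.mk_add_mk, smul_eq_mul]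
  rw [zPart_comb]
  have := mul_le_mul_of_nonneg_left (norm_comb ha hb (zPart ξ) (zPart η)) hθ
  linear_combination 2 * this + M * hab

/-- Closed under rank one segments. -/
def LamClosed (G : Set (Matrix (Fin 2) (Fin 2) ℝ)) : Prop :=
  ∀ (ξ η : Matrix (Fin 2) (Fin 2) ℝ) (t : ℝ), 0 ≤ t → t ≤ 1 → (ξ - η).det = 0 →
    ξ ∈ G → η ∈ G → t • ξ + (1 - t) • η ∈ G

theorem LamClosed.lamT {G : Set (Matrix (Fin 2) (Fin 2) ℝ)} (hG : LamClosed G) :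
    LamT (fun z w => Mzw z w ∈ G) := by
  intro z₁ w₁ z₂ w₂ t h0 h1 hn a b
  have hsub : Mzw z₁ w₁ - Mzw z₂ w₂ = Mzw (z₁ - z₂) (w₁ - w₂) := by
    ext i j
    fin_cases i <;> fin_cases j <;> simp [Mzw] <;> ring
  have := hG _ _ t h0 h1 (by
    rw [hsub, det_parts, zPart_Mzw, wPart_Mzw, hn, sub_self]) a b
  convert this using 1
  ext i j
  fin_cases i <;> fin_cases j <;> simp [Mzw] <;> ring

theorem pcHull_subset_of_lamClosed (K : Set (ℝ × ℝ)) (hKc : IsCompact K)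
    (hKsub : K ⊆ {p : ℝ × ℝ | 0 < p.1 ∧ p.1 ≤ p.2})
    (E : Set (Matrix (Fin 2) (Fin 2) ℝ)) (hE : E = {ξ | (lam1 ξ, lam2 ξ) ∈ K})
    {G : Set (Matrix (Fin 2) (Fin 2) ℝ)} (hG : LamClosed G) (hEG : E ⊆ G) : pcHull E ⊆ G := by
  intro ξ hξ
  rcases K.eq_empty_or_nonempty with hK | hK
  · exfalso
    have := hξ (fun _ => 1) ⟨fun _ => 1, convexOn_const _ convex_univ, fun _ => rfl⟩ (by
      intro η hη
      rw [hE, hK] at hη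
      exact absurd hη (by simp))
    linarith
  obtain ⟨⟨a, B⟩, haB, hmax⟩ := hKc.exists_isMaxOn hK (f := fun p => p.2) (by fun_prop)
  have hmax' : ∀ p ∈ K, p.2 ≤ B := fun p hp => hmax hp
  have hT := hG.lamT
  have hKT : ∀ p ∈ K, FullR (fun z w => Mzw z w ∈ G) ((p.1 + p.2) / 2) ((p.2 - p.1) / 2) := by
    rintro ⟨x, y⟩ hp z w hzw
    obtain ⟨hx, hxy⟩ := hKsub hp
    simp only at hx hxy hzw
    apply hEG
    rw [hE]
    show (lam1 (Mzw z w), lam2 (Mzw z w)) ∈ K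
    rcases hzw with ⟨h1, h2⟩ | ⟨h1, h2⟩
    · obtain ⟨l1, l2⟩ := lam_of_ge (Mzw z w) (by
        rw [zPart_Mzw, wPart_Mzw, h1, h2]; linarith)
      rw [l1, l2, zPart_Mzw, wPart_Mzw, h1, h2]
      convert hp using 2 <;> ring
    · obtain ⟨l1, l2⟩ := lam_of_le (Mzw z w) (by
        rw [zPart_Mzw, wPart_Mzw, h1, h2]; linarith)
      rw [l1, l2, zPart_Mzw, wPart_Mzw, h1, h2]
      convert hp using 2 <;> ring
  have hmain : ∀ θ : ℝ, 0 ≤ θ → θ ≤ B → ∃ k ∈ K,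
      ξ.det + 2 * θ * ‖wPart ξ‖ ≤ k.1 * k.2 + θ * (k.2 - k.1) ∧
      -ξ.det + 2 * θ * ‖zPart ξ‖ ≤ k.1 * k.2 + θ * (k.2 - k.1) := by
    intro θ h0 hB
    obtain ⟨k, hk, hkmax⟩ := hKc.exists_isMaxOn hK
      (f := fun p => p.1 * p.2 + θ * (p.2 - p.1)) (by fun_prop)
    have hkm : ∀ p ∈ K, p.1 * p.2 + θ * (p.2 - p.1) ≤ k.1 * k.2 + θ * (k.2 - k.1) :=
      fun p hp => hkmax hp
    set M := k.1 * k.2 + θ * (k.2 - k.1)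
    have hkm2 : ∀ p ∈ K, -(p.1 * p.2) + θ * (p.2 + p.1) ≤ M := by
      intro p hp
      obtain ⟨q1, q2⟩ := hKsub hp
      rcases le_total θ p.2 with h | h
      · have := hkm p hp
        nlinarith
      · have := hkm _ haB
        obtain ⟨q3, q4⟩ := hKsub haB
        simp only at this q3 q4
        nlinarith [mul_nonneg (sub_nonneg.2 h) (sub_nonneg.2 (q2.trans h)),
          mul_nonneg (sub_nonneg.2 hB) (add_nonneg h0 q3.le)]
    refine ⟨k, hk, ?_, ?_⟩
    · have := hξ _ (poly1 θ M h0) (by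
        intro η hη
        rw [hE] at hη
        simp only [Set.mem_ofPred_eq] at hη
        rcases le_total ‖wPart η‖ ‖zPart η‖ with h | h
        · obtain ⟨l1, l2⟩ := lam_of_ge η h
          have := hkm _ hη
          rw [l1, l2] at this
          rw [det_parts]
          simp only at this
          linarith
        · obtain ⟨l1, l2⟩ := lam_of_le η h
          have := hkm2 _ hη
          rw [l1, l2] at this
          rw [det_parts]
          simp only at this
          linarith)
      linarith
    · have := hξ _ (poly2 θ M h0) (by
        intro η hη
        rw [hE] at hη
        simp only [Set.mem_ofPred_eq] at hη
        rcases le_total ‖wPart η‖ ‖zPart η‖ with h | h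
        · obtain ⟨l1, l2⟩ := lam_of_ge η h
          have := hkm2 _ hη
          rw [l1, l2] at this
          rw [det_parts]
          simp only at this
          linarith
        · obtain ⟨l1, l2⟩ := lam_of_le η h
          have := hkm _ hη
          rw [l1, l2] at this
          rw [det_parts]
          simp only at this
          linarith)
      linarith
  rw [← Mzw_parts ξ]
  rw [det_parts] at hmain
  rcases le_total ‖wPart ξ‖ ‖zPart ξ‖ with h | h
  · exact cover hT hKc hKsub hKT haB hmax' (norm_nonneg _) h (by
      intro θ h0 h1
      obtain ⟨k, hk, hk1, hk2⟩ := hmain θ h0 h1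
      exact ⟨k, hk, hk1⟩) _ _ (Or.inl ⟨rfl, rfl⟩)
  · exact cover hT hKc hKsub hKT haB hmax' (norm_nonneg _) h (by
      intro θ h0 h1
      obtain ⟨k, hk, hk1, hk2⟩ := hmain θ h0 h1
      exact ⟨k, hk, by linarith⟩) _ _ (Or.inr ⟨rfl, rfl⟩)

theorem det_comb {ξ η : Matrix (Fin 2) (Fin 2) ℝ} (h : (ξ - η).det = 0) (t : ℝ) :
    (t • ξ + (1 - t) • η).det = t * ξ.det + (1 - t) * η.det := by
  rw [Matrix.det_fin_two] at h ⊢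
  simp only [Matrix.det_fin_two, Matrix.add_apply, Matrix.sub_apply, Matrix.smul_apply,
    smul_eq_mul] at h ⊢
  linear_combination (-t * (1 - t)) * h

theorem det_eq_zero_of_rank_one {ξ : Matrix (Fin 2) (Fin 2) ℝ} (h : ξ.rank = 1) : ξ.det = 0 := by
  by_contra hd
  have := Matrix.rank_of_isUnit ξ ((Matrix.isUnit_iff_isUnit_det ξ).2 (isUnit_iff_ne_zero.2 hd))
  rw [h] at this
  simp at this

theorem rank_ne_zero_of_ne_zero {ξ : Matrix (Fin 2) (Fin 2) ℝ} (h0 : ξ ≠ 0) : ξ.rank ≠ 0 := by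
  intro h
  apply h0
  rw [Matrix.rank] at h
  have h1 : LinearMap.range ξ.mulVecLin = ⊥ := Submodule.finrank_eq_zero.1 h
  have h2 : ξ.mulVecLin = 0 := LinearMap.range_eq_bot.1 h1
  ext i j
  have h3 := congrFun (LinearMap.congr_fun h2 (Pi.single j 1)) i
  simpa using h3

theorem rank_of_det_eq_zero {ξ : Matrix (Fin 2) (Fin 2) ℝ} (h : ξ.det = 0) (h0 : ξ ≠ 0) :
    ξ.rank = 1 := by
  have h1 := rank_ne_zero_of_ne_zero h0
  have h2 : ξ.adjugate ≠ 0 := by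
    intro ha
    apply h0
    rw [Matrix.adjugate_fin_two] at ha
    ext i j
    have a1 := congrFun (congrFun ha 0) 0
    have a2 := congrFun (congrFun ha 0) 1
    have a3 := congrFun (congrFun ha 1) 0
    have a4 := congrFun (congrFun ha 1) 1
    simp at a1 a2 a3 a4
    fin_cases i <;> fin_cases j <;> simp [a1, a2, a3, a4]
  have h3 := rank_ne_zero_of_ne_zero h2
  have h4 := Matrix.rank_add_rank_le_card_of_mul_eq_zero (A := ξ) (B := ξ.adjugate)
    (by rw [Matrix.mul_adjugate, h, zero_smul])
  rw [Fintype.card_fin] at h4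
  omega

theorem rcHull_lamClosed (E : Set (Matrix (Fin 2) (Fin 2) ℝ)) : LamClosed (rcHull E) := by
  intro ξ η t h0 h1 hd hξ hη f hf hfE
  by_cases hne : ξ - η = 0
  · have : ξ = η := sub_eq_zero.1 hne
    subst this
    rw [← add_smul, add_sub_cancel, one_smul]
    exact hξ f hf hfE
  · have := hf ξ η t ⟨h0, h1⟩ (rank_of_det_eq_zero hd hne)
    have a := hξ f hf hfE
    have b := hη f hf hfE
    nlinarith

theorem PolyconvexSet.lamClosed {A : Set (Matrix (Fin 2) (Fin 2) ℝ)} (hA : PolyconvexSet A) :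
    LamClosed A := by
  intro ξ η t h0 h1 hd hξ hη
  have := hA ![ξ, η, η, η, η] ![t, 1 - t, 0, 0, 0] (by
      intro i
      fin_cases i <;> simp [hξ, hη]) (by
      intro i
      fin_cases i <;> simp [h0, h1]) (by
      simp [Fin.sum_univ_five]) (by
      simp [Fin.sum_univ_five, det_comb hd])
  simpa [Fin.sum_univ_five] using this

theorem Pco_lamClosed (E : Set (Matrix (Fin 2) (Fin 2) ℝ)) : LamClosed (Pco E) := by
  intro ξ η t h0 h1 hd hξ hη A hA
  exact hA.1.lamClosed ξ η t h0 h1 hd (hξ A hA) (hη A hA)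

theorem PolyconvexFun.rankOneConvex {f : Matrix (Fin 2) (Fin 2) ℝ → ℝ} (hf : PolyconvexFun f) :
    RankOneConvex f := by
  obtain ⟨g, hg, hfg⟩ := hf
  intro ξ η t ht hr
  have hd := det_comb (det_eq_zero_of_rank_one hr) t
  rw [hfg, hfg, hfg, hd]
  have := hg.2 (Set.mem_univ (ξ, ξ.det)) (Set.mem_univ (η, η.det)) ht.1 (sub_nonneg.2 ht.2)
    (by ring)
  simpa using this

theorem pcHull_polyconvexSet (E : Set (Matrix (Fin 2) (Fin 2) ℝ)) : PolyconvexSet (pcHull E) := by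
  intro ξ t hξ ht hs hd f hf hfE
  have hle : ∀ i, f (ξ i) ≤ 0 := fun i => hξ i f hf hfE
  obtain ⟨g, hg, hfg⟩ := hf
  have := hg.map_sum_le (t := Finset.univ) (w := t) (p := fun i => (ξ i, (ξ i).det))
    (fun i _ => ht i) hs (fun i _ => Set.mem_univ _)
  have e : ∑ i, t i • ((ξ i, (ξ i).det) : Matrix (Fin 2) (Fin 2) ℝ × ℝ) =
      (∑ i, t i • ξ i, (∑ i, t i • ξ i).det) := by
    rw [← hd]
    apply Prod.ext
    · simp [Prod.fst_sum]
    · simp [Prod.snd_sum]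
  rw [e] at this
  rw [hfg]
  refine this.trans (Finset.sum_nonpos fun i _ => ?_)
  rw [← hfg, smul_eq_mul]
  exact mul_nonpos_of_nonneg_of_nonpos (ht i) (hle i)

/-- for the isotropic compact set `E` defined by `K`, `E^{rc} = E^{pc} = Pco E`. -/
theorem rcHull_eq_pcHull_eq_Pco (K : Set (ℝ × ℝ)) (hKc : IsCompact K)
    (hKsub : K ⊆ {p : ℝ × ℝ | 0 < p.1 ∧ p.1 ≤ p.2})
    (E : Set (Matrix (Fin 2) (Fin 2) ℝ)) (hE : E = {ξ | (lam1 ξ, lam2 ξ) ∈ K}) :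
    rcHull E = pcHull E ∧ pcHull E = Pco E := by
  refine ⟨Set.Subset.antisymm ?_ ?_, Set.Subset.antisymm ?_ ?_⟩
  · intro ξ hξ f hf hfE
    exact hξ f hf.rankOneConvex hfE
  · exact pcHull_subset_of_lamClosed K hKc hKsub E hE (rcHull_lamClosed E)
      (fun η hη f _ hfE => hfE η hη)
  · exact pcHull_subset_of_lamClosed K hKc hKsub E hE (Pco_lamClosed E)
      (fun η hη A hA => hA.2 hη)
  · intro ξ hξ
    exact hξ _ ⟨pcHull_polyconvexSet E, fun η hη f _ hfE => hfE η hη⟩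
end
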